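/- arXiv:2212.14826 — 2 statements merged into one kernel-verified Lean document; each statement's English description precedes it below -/
import Mathlib

section
/- Let Λ ≥ 1 and a > 0, and let ū, v̄ be C² functions on S²∖{N,S} such that ū + ln sinθ extends to S² with |ū + ln sinθ| ≤ Λ, the equations Δ_{g₀}ū = 2e^{4ū}|∇_{g₀}v̄|² and Δ_{g₀}v̄ = −4∇_{g₀}ū·∇_{g₀}v̄ hold on S²∖{N,S}, ∫_{S²} ( |∇_{g₀}(ū + ln sinθ)|² + e^{4ū}|∇_{g₀}v̄|² ) dvol_{g₀} < ∞, and v̄ extends continuously to the poles with v̄(N) = a and v̄(S) = −a. Then there exists a constant b ∈ (−1,1) such that ū = u_{a,b} and v̄ = v_{a,b}; in particular ū and v̄ are axisymmetric (independent of φ). -/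
open Real MeasureTheory Set Filter

noncomputable section

/-- `θ`-partial derivative of a function of `(θ, φ)`. -/
def pdθ (f : ℝ → ℝ → ℝ) : ℝ → ℝ → ℝ := fun θ φ => deriv (fun x => f x φ) θ

/-- `φ`-partial derivative of a function of `(θ, φ)`. -/
def pdφ (f : ℝ → ℝ → ℝ) : ℝ → ℝ → ℝ := fun θ φ => deriv (fun x => f θ x) φ

/-- coordinate derivative in direction `i` (`0 = θ`, `1 = φ`). -/
def pder2 (i : Fin 2) : (ℝ → ℝ → ℝ) → (ℝ → ℝ → ℝ) := if i = 0 then pdθ else pdφ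

/-- Christoffel symbols `Γ^m_{i j}` of the round metric on `S²` in `(θ, φ)`. -/
def christoffel (m i j : Fin 2) (θ : ℝ) : ℝ :=
  if m = 0 ∧ i = 1 ∧ j = 1 then -(Real.sin θ * Real.cos θ)
  else if m = 1 ∧ ((i = 0 ∧ j = 1) ∨ (i = 1 ∧ j = 0)) then Real.cos θ / Real.sin θ
  else 0

/-- covariant derivative (in the round metric) of a `k`-tensor on `S²`,
given by its coordinate components. -/
def covDer {k : ℕ} (T : (Fin k → Fin 2) → ℝ → ℝ → ℝ) :
    (Fin (k + 1) → Fin 2) → ℝ → ℝ → ℝ := fun I θ φ =>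
  pder2 (I 0) (T fun j => I j.succ) θ φ
    - ∑ j : Fin k, ∑ m : Fin 2,
        christoffel m (I 0) (I j.succ) θ *
          T (Function.update (fun j' => I j'.succ) j m) θ φ

/-- the `k`-th covariant derivative of a function on `S²`. -/
def covIter (f : ℝ → ℝ → ℝ) : (k : ℕ) → (Fin k → Fin 2) → ℝ → ℝ → ℝ
  | 0 => fun _ => f
  | k + 1 => covDer (covIter f k)

/-- inverse-metric weight used to compute tensor norms. -/
def sphWeight (i : Fin 2) (θ : ℝ) : ℝ := if i = 0 then 1 else (Real.sin θ ^ 2)⁻¹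

/-- `|∇_{g₀}^k f|`, the norm of the `k`-th covariant derivative in the round metric. -/
def covNorm (k : ℕ) (f : ℝ → ℝ → ℝ) (θ φ : ℝ) : ℝ :=
  Real.sqrt (∑ I : Fin k → Fin 2, (∏ j, sphWeight (I j) θ) * (covIter f k I θ φ) ^ 2)

/-- `∇_{g₀}f·∇_{g₀}h` on the round sphere. -/
def gradDotS2 (f g : ℝ → ℝ → ℝ) (θ φ : ℝ) : ℝ :=
  pdθ f θ φ * pdθ g θ φ + (Real.sin θ ^ 2)⁻¹ * pdφ f θ φ * pdφ g θ φ

/-- `|∇_{g₀}f|²` on the round sphere. -/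
def gradNormSqS2 (f : ℝ → ℝ → ℝ) (θ φ : ℝ) : ℝ := gradDotS2 f f θ φ

/-- `Δ_{g₀}f`, the round Laplacian in coordinates. -/
def lapS2 (f : ℝ → ℝ → ℝ) (θ φ : ℝ) : ℝ :=
  pdθ (pdθ f) θ φ + (Real.cos θ / Real.sin θ) * pdθ f θ φ +
    (Real.sin θ ^ 2)⁻¹ * pdφ (pdφ f) θ φ

/-- integral over `S²` with respect to `dvol_{g₀} = sinθ dθ dφ`. -/
def sphInt (f : ℝ → ℝ → ℝ) : ℝ :=
  ∫ θ in Ioo (0 : ℝ) π, (∫ φ in Ioo (0 : ℝ) (2 * π), f θ φ) * Real.sin θ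

/-- round distance between the points with coordinates `(θ, φ)` and `(θ', φ')`. -/
def sDist (θ φ θ' φ' : ℝ) : ℝ :=
  Real.arccos (Real.cos θ * Real.cos θ' + Real.sin θ * Real.sin θ' * Real.cos (φ - φ'))

/-- a function on `S²` (in coordinates), of class `C^k`, with bounded covariant
derivatives up to order `k`. -/
def CkSphere (k : ℕ) (f : ℝ → ℝ → ℝ) : Prop :=
  ContDiffOn ℝ k (fun p : ℝ × ℝ => f p.1 p.2) (Ioo 0 π ×ˢ (univ : Set ℝ)) ∧
  (∀ θ φ : ℝ, f θ (φ + 2 * π) = f θ φ) ∧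
  ∃ C : ℝ, ∀ j ≤ k, ∀ θ ∈ Ioo (0 : ℝ) π, ∀ φ : ℝ, covNorm j f θ φ ≤ C

/-- a smooth function on `S²` (in coordinates), with bounded covariant derivatives
of all orders. -/
def SmoothSphere (f : ℝ → ℝ → ℝ) : Prop :=
  ContDiffOn ℝ (⊤ : ℕ∞) (fun p : ℝ × ℝ => f p.1 p.2) (Ioo 0 π ×ˢ (univ : Set ℝ)) ∧
  (∀ θ φ : ℝ, f θ (φ + 2 * π) = f θ φ) ∧
  ∀ j : ℕ, ∃ C : ℝ, ∀ θ ∈ Ioo (0 : ℝ) π, ∀ φ : ℝ, covNorm j f θ φ ≤ C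
/-- Euclidean 3-space. -/
abbrev E3 := EuclideanSpace ℝ (Fin 3)

/-- the `i`-th standard basis vector. -/
def e3 (i : Fin 3) : E3 := EuclideanSpace.single i 1

/-- partial derivative in the `i`-th coordinate direction. -/
def pd3 (i : Fin 3) (f : E3 → ℝ) (x : E3) : ℝ := fderiv ℝ f x (e3 i)

/-- the Euclidean Laplacian `Δf`. -/
def lap3 (f : E3 → ℝ) (x : E3) : ℝ := ∑ i : Fin 3, pd3 i (fun y => pd3 i f y) x

/-- the Euclidean inner product of gradients, `∇f·∇g`. -/
def dot3 (f g : E3 → ℝ) (x : E3) : ℝ := ∑ i : Fin 3, pd3 i f x * pd3 i g x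

/-- the `z`-axis `Γ ⊆ ℝ³`. -/
def axisΓ : Set E3 := {x : E3 | x 0 = 0 ∧ x 1 = 0}

/-- the open unit ball `B₁ ⊆ ℝ³`. -/
def B1 : Set E3 := Metric.ball (0 : E3) 1

/-- the cylindrical radius `ρ = √(x₀² + x₁²)`. -/
def ρc (x : E3) : ℝ := Real.sqrt ((x 0) ^ 2 + (x 1) ^ 2)

/-- the point with spherical coordinates `(r, θ, φ)`. -/
def sph (r θ φ : ℝ) : E3 :=
  (EuclideanSpace.equiv (Fin 3) ℝ).symm
    ![r * Real.sin θ * Real.cos φ, r * Real.sin θ * Real.sin φ, r * Real.cos θ]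

/-- the point with cylindrical coordinates `(ρ, 0, z)`. -/
def cylPt (ρ z : ℝ) : E3 := (EuclideanSpace.equiv (Fin 3) ℝ).symm ![ρ, 0, z]

/-- the radial operator `r∂_r` on functions of spherical coordinates. -/
def Dr (F : ℝ → ℝ → ℝ → ℝ) : ℝ → ℝ → ℝ → ℝ :=
  fun r θ φ => r * deriv (fun s => F s θ φ) r

/-- `ρ`-partial derivative of a function of `(ρ, z)`. -/
def dρ (f : ℝ → ℝ → ℝ) (ρ z : ℝ) : ℝ := deriv (fun s => f s z) ρ

/-- `z`-partial derivative of a function of `(ρ, z)`. -/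
def dz (f : ℝ → ℝ → ℝ) (ρ z : ℝ) : ℝ := deriv (fun s => f ρ s) z

/-- a harmonic map `(u,v) : Ω → ℍ²` (horospherical coordinates, curvature `−2`). -/
def HarmonicPair (u v : E3 → ℝ) (Ω : Set E3) : Prop :=
  ContDiffOn ℝ 3 u Ω ∧ ContDiffOn ℝ 3 v Ω ∧
  ∀ x ∈ Ω, lap3 u x = 2 * Real.exp (4 * u x) * dot3 v v x ∧
    lap3 v x = -4 * dot3 u v x

/-- `f` is `C^{3,α}` on `s`: it is `C³` there and its third derivatives are
`α`-Hölder on compact subsets. -/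
def C3HolderOn (α : ℝ) (f : E3 → ℝ) (s : Set E3) : Prop :=
  ContDiffOn ℝ 3 f s ∧
  ∀ K : Set E3, K ⊆ s → IsCompact K →
    ∃ C : NNReal, HolderOnWith C α.toNNReal (iteratedFDerivWithin ℝ 3 f s) K

/-- `(f, plus its singular part) ∈ C^{3,α}(S²)` in coordinates: `C³` with bounded
covariant derivatives, `2π`-periodic in `φ`, and third covariant derivative
`α`-Hölder (componentwise) with respect to the round distance. -/
def SphHolder3 (α : ℝ) (f : ℝ → ℝ → ℝ) : Prop :=
  ContDiffOn ℝ 3 (fun p : ℝ × ℝ => f p.1 p.2) (Ioo 0 π ×ˢ (univ : Set ℝ)) ∧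
  (∀ θ φ : ℝ, f θ (φ + 2 * π) = f θ φ) ∧
  ∃ C : ℝ, (∀ k ≤ 3, ∀ θ ∈ Ioo (0 : ℝ) π, ∀ φ : ℝ, covNorm k f θ φ ≤ C) ∧
    ∀ I : Fin 3 → Fin 2, ∀ θ ∈ Ioo (0 : ℝ) π, ∀ θ' ∈ Ioo (0 : ℝ) π, ∀ φ φ' : ℝ,
      |covIter f 3 I θ φ - covIter f 3 I θ' φ'| ≤ C * sDist θ φ θ' φ' ^ α

/-- the extreme-Kerr-type geodesic `u_{a,b}`. -/
def uab (a b θ : ℝ) : ℝ :=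
  -Real.log (Real.sin θ) -
    (1 / 2) * Real.log (2 * a * Real.sqrt (1 - b ^ 2) /
      (1 + Real.cos θ ^ 2 + 2 * b * Real.cos θ))

/-- the extreme-Kerr-type geodesic `v_{a,b}`. -/
def vab (a b θ : ℝ) : ℝ :=
  a * (b + b * Real.cos θ ^ 2 + 2 * Real.cos θ) /
    (1 + Real.cos θ ^ 2 + 2 * b * Real.cos θ)
def th (s : ℝ) : ℝ := 2 * arctan (exp s)

lemma th_mem (s : ℝ) : th s ∈ Ioo 0 π := by
  have h1 : 0 < arctan (exp s) := by
    rw [← arctan_zero]; exact arctan_strictMono (exp_pos s)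
  have h2 := arctan_lt_pi_div_two (exp s)
  unfold th
  constructor <;> linarith

lemma sin_th_pos (s : ℝ) : 0 < sin (th s) := sin_pos_of_mem_Ioo (th_mem s)

lemma cos_th (s : ℝ) : cos (th s) = - sinh s / cosh s := by
  unfold th
  rw [cos_two_mul, cos_sq_arctan, sinh_eq, cosh_eq, exp_neg]
  have := exp_pos s
  field_simp
  ring

lemma sin_th (s : ℝ) : sin (th s) = 1 / cosh s := by
  have h1 := cosh_pos s
  have h2 := sin_sq_add_cos_sq (th s)
  rw [cos_th] at h2
  have h3 : sin (th s) ^ 2 = (1 / cosh s) ^ 2 := by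
    have h4 := cosh_sq s
    field_simp at h2 ⊢
    linarith
  exact (pow_left_inj₀ (sin_th_pos s).le (by positivity) two_ne_zero).1 h3

lemma hasDerivAt_th (s : ℝ) : HasDerivAt th (sin (th s)) s := by
  have h := ((Real.hasDerivAt_exp s).arctan).const_mul 2
  have e : sin (th s) = 2 * (1 / (1 + exp s ^ 2) * exp s) := by
    rw [sin_th, cosh_eq, exp_neg]
    have := exp_pos s
    field_simp
    ring
  rw [e]
  exact h

lemma contDiff_th : ContDiff ℝ 2 th := by
  unfold th
  exact contDiff_const.mul (contDiff_arctan.comp contDiff_exp)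

lemma th_strictMono : StrictMono th := by
  intro x y h
  unfold th
  have := arctan_strictMono (exp_lt_exp.2 h)
  linarith

lemma th_surj {θ : ℝ} (h : θ ∈ Ioo 0 π) : ∃ s, th s = θ := by
  refine ⟨log (tan (θ / 2)), ?_⟩
  have h1 : 0 < tan (θ / 2) := tan_pos_of_pos_of_lt_pi_div_two (by linarith [h.1]) (by linarith [h.2])
  unfold th
  rw [exp_log h1, arctan_tan (by linarith [h.1, pi_pos]) (by linarith [h.2])]
  ring

lemma convex_half (P P1 P2 : ℝ → ℝ) (h1 : ∀ s, HasDerivAt P (P1 s) s)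
    (h2 : ∀ s, HasDerivAt P1 (P2 s) s) (h3 : ∀ s, 0 ≤ P2 s) (s0 : ℝ) :
    (∀ s, s0 ≤ s → P s0 ≤ P s) ∨ (∀ s, s ≤ s0 → P s0 ≤ P s) := by
  have hm : Monotone P1 := monotone_of_deriv_nonneg (fun s => (h2 s).differentiableAt)
    (fun s => by rw [(h2 s).deriv]; exact h3 s)
  have hc : Continuous P := continuous_iff_continuousAt.2 fun s => (h1 s).continuousAt
  rcases le_total 0 (P1 s0) with h | h
  · left
    intro s hs
    have : MonotoneOn P (Ici s0) := by
      apply monotoneOn_of_deriv_nonneg (convex_Ici s0) hc.continuousOn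
      · exact fun x _ => (h1 x).differentiableAt.differentiableWithinAt
      · intro x hx
        rw [interior_Ici] at hx
        rw [(h1 x).deriv]
        exact h.trans (hm (le_of_lt hx))
    exact this (mem_Ici.2 le_rfl) hs hs
  · right
    intro s hs
    have : AntitoneOn P (Iic s0) := by
      apply antitoneOn_of_deriv_nonpos (convex_Iic s0) hc.continuousOn
      · exact fun x _ => (h1 x).differentiableAt.differentiableWithinAt
      · intro x hx
        rw [interior_Iic] at hx
        rw [(h1 x).deriv]
        exact (hm (le_of_lt hx)).trans h
    exact this hs (mem_Iic.2 le_rfl) hs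

/-- cosh of (twice the) hyperbolic distance, minus one. -/
def Qf (u v w z : ℝ) : ℝ :=
  (exp (2 * u - 2 * w) + exp (2 * w - 2 * u)) / 2 - 1 + 2 * exp (2 * u + 2 * w) * (v - z) ^ 2

def Q1f (u v w z p vi q zi : ℝ) : ℝ :=
  (exp (2 * u - 2 * w) - exp (2 * w - 2 * u)) * (p - q)
    + 4 * exp (2 * u + 2 * w) * (p + q) * (v - z) ^ 2
    + 4 * exp (2 * u + 2 * w) * (v - z) * (vi - zi)

def Q2f (u v w z p vi q zi u2 v2 w2 z2 : ℝ) : ℝ :=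
  2 * (exp (2 * u - 2 * w) + exp (2 * w - 2 * u)) * (p - q) ^ 2
    + (exp (2 * u - 2 * w) - exp (2 * w - 2 * u)) * (u2 - w2)
    + 8 * exp (2 * u + 2 * w) * (p + q) ^ 2 * (v - z) ^ 2
    + 4 * exp (2 * u + 2 * w) * (u2 + w2) * (v - z) ^ 2
    + 16 * exp (2 * u + 2 * w) * (p + q) * (v - z) * (vi - zi)
    + 4 * exp (2 * u + 2 * w) * (vi - zi) ^ 2
    + 4 * exp (2 * u + 2 * w) * (v - z) * (v2 - z2)

lemma hasDerivAt_Qf {u v w z : ℝ → ℝ} {p vi q zi x : ℝ}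
    (hu : HasDerivAt u p x) (hv : HasDerivAt v vi x) (hw : HasDerivAt w q x)
    (hz : HasDerivAt z zi x) :
    HasDerivAt (fun x => Qf (u x) (v x) (w x) (z x))
      (Q1f (u x) (v x) (w x) (z x) p vi q zi) x := by
  have e1 := ((hu.const_mul 2).sub (hw.const_mul 2)).exp
  have e2 := ((hw.const_mul 2).sub (hu.const_mul 2)).exp
  have e3 := ((hu.const_mul 2).add (hw.const_mul 2)).exp
  have e4 := (hv.sub hz).pow 2
  have := (((e1.add e2).div_const 2).sub_const 1).add ((e3.const_mul 2).mul e4)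
  unfold Qf
  refine this.congr_deriv ?_
  simp only [Q1f, Pi.add_apply, Pi.sub_apply, Pi.pow_apply]
  push_cast
  ring

lemma hasDerivAt_Q1f {u v w z p vi q zi : ℝ → ℝ} {u2 v2 w2 z2 x : ℝ}
    (hu : HasDerivAt u (p x) x) (hv : HasDerivAt v (vi x) x) (hw : HasDerivAt w (q x) x)
    (hz : HasDerivAt z (zi x) x)
    (hp : HasDerivAt p u2 x) (hvi : HasDerivAt vi v2 x) (hq : HasDerivAt q w2 x)
    (hzi : HasDerivAt zi z2 x) :
    HasDerivAt (fun x => Q1f (u x) (v x) (w x) (z x) (p x) (vi x) (q x) (zi x))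
      (Q2f (u x) (v x) (w x) (z x) (p x) (vi x) (q x) (zi x) u2 v2 w2 z2) x := by
  have e1 := ((hu.const_mul 2).sub (hw.const_mul 2)).exp
  have e2 := ((hw.const_mul 2).sub (hu.const_mul 2)).exp
  have e3 := (((hu.const_mul 2).add (hw.const_mul 2)).exp).const_mul 4
  have e4 := (hv.sub hz).pow 2
  have := (((e1.sub e2).mul (hp.sub hq)).add ((e3.mul (hp.add hq)).mul e4)).add
    ((e3.mul (hv.sub hz)).mul (hvi.sub hzi))
  unfold Q1f
  refine this.congr_deriv ?_
  simp only [Q2f, Pi.add_apply, Pi.sub_apply, Pi.mul_apply, Pi.pow_apply]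
  push_cast
  ring

lemma Q2f_nonneg (u v w z p vi q zi : ℝ) :
    0 ≤ Q2f u v w z p vi q zi (2 * exp (4 * u) * vi ^ 2) (-4 * (p * vi))
      (2 * exp (4 * w) * zi ^ 2) (-4 * (q * zi)) := by
  set k := exp (u - w) with hk
  set g := exp (u + w) with hg
  have hk0 : 0 < k := exp_pos _
  have hg0 : 0 < g := exp_pos _
  have a1 : exp (2 * u - 2 * w) = k ^ 2 := by rw [hk, ← exp_nat_mul]; congr 1; push_cast; ring
  have a2 : exp (2 * w - 2 * u) = (1 / k) ^ 2 := by
    rw [hk, one_div, ← exp_neg, ← exp_nat_mul]; congr 1; push_cast; ring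
  have a3 : exp (2 * u + 2 * w) = g ^ 2 := by rw [hg, ← exp_nat_mul]; congr 1; push_cast; ring
  have a4 : exp (4 * u) = g ^ 2 * k ^ 2 := by
    rw [← a1, ← a3, ← exp_add]; congr 1; ring
  have a5 : exp (4 * w) = g ^ 2 * (1 / k) ^ 2 := by
    rw [← a2, ← a3, ← exp_add]; congr 1; ring
  unfold Q2f
  rw [a1, a2, a3, a4, a5]
  have : (2 * k ^ 2 + 2 * (1 / k) ^ 2 : ℝ) = 2 * (k ^ 2 + (1 / k) ^ 2) := by ring
  have key : 2 * (k ^ 2 + (1 / k) ^ 2) * (p - q) ^ 2 +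
      (k ^ 2 - (1 / k) ^ 2) * (2 * (g ^ 2 * k ^ 2) * vi ^ 2 - 2 * (g ^ 2 * (1 / k) ^ 2) * zi ^ 2) +
      8 * g ^ 2 * (p + q) ^ 2 * (v - z) ^ 2 +
      4 * g ^ 2 * (2 * (g ^ 2 * k ^ 2) * vi ^ 2 + 2 * (g ^ 2 * (1 / k) ^ 2) * zi ^ 2) * (v - z) ^ 2 +
      16 * g ^ 2 * (p + q) * (v - z) * (vi - zi) + 4 * g ^ 2 * (vi - zi) ^ 2 +
      4 * g ^ 2 * (v - z) * (-4 * (p * vi) - -4 * (q * zi)) =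
      2 * ((2 * (v - z) * g * (p + q) + g * (vi - zi)) ^ 2
        + (k ^ 2 * g * vi - (1 / k) ^ 2 * g * zi) ^ 2
        + ((1 / k) * (p - q) - 2 * (v - z) * g ^ 2 * k * vi) ^ 2
        + (k * (p - q) - 2 * (v - z) * g ^ 2 * (1 / k) * zi) ^ 2) := by
    field_simp
    ring
  rw [key]
  positivity

lemma sq_sub_le {f f' : ℝ → ℝ} {T : ℝ} (hf : ∀ x, HasDerivAt f (f' x) x) (hc : Continuous f')
    {x y : ℝ} (hx : x ∈ Icc 0 T) (hy : y ∈ Icc 0 T) :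
    (f x - f y) ^ 2 ≤ T * ∫ t in (0:ℝ)..T, f' t ^ 2 := by
  wlog h : y ≤ x generalizing x y
  · have := this hy hx (le_of_not_ge h)
    rw [← neg_sq]; simpa using this
  have hI : ∀ a b, IntervalIntegrable (fun t => f' t ^ 2) volume a b :=
    fun a b => (hc.pow 2).intervalIntegrable a b
  have hmono : ∫ t in y..x, f' t ^ 2 ≤ ∫ t in (0:ℝ)..T, f' t ^ 2 :=
    intervalIntegral.integral_mono_interval hy.1 h hx.2
      (Eventually.of_forall fun t => sq_nonneg _) (hI _ _)
  have hpos : 0 ≤ ∫ t in y..x, f' t ^ 2 :=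
    intervalIntegral.integral_nonneg h fun t _ => sq_nonneg _
  have hD : ∫ t in y..x, f' t = f x - f y :=
    intervalIntegral.integral_eq_sub_of_hasDerivAt (fun t _ => hf t) (hc.intervalIntegrable _ _)
  have hCS : (f x - f y) ^ 2 ≤ (x - y) * ∫ t in y..x, f' t ^ 2 := by
    rcases h.eq_or_lt with rfl | hlt
    · simp
    set c := (f x - f y) / (x - y) with hcdef
    have hxy : 0 < x - y := by linarith
    have h0 : 0 ≤ ∫ t in y..x, (f' t - c) ^ 2 :=
      intervalIntegral.integral_nonneg h fun t _ => sq_nonneg _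
    have e : ∫ t in y..x, (f' t - c) ^ 2 =
        (∫ t in y..x, f' t ^ 2) - 2 * c * (f x - f y) + c ^ 2 * (x - y) := by
      have : ∀ t, (f' t - c) ^ 2 = f' t ^ 2 - 2 * c * f' t + c ^ 2 := fun t => by ring
      simp_rw [this]
      rw [intervalIntegral.integral_add, intervalIntegral.integral_sub,
        intervalIntegral.integral_const_mul, hD, intervalIntegral.integral_const]
      · simp; ring
      · exact hI _ _
      · exact (continuous_const.mul hc).intervalIntegrable _ _
      · exact ((hc.pow 2).sub (continuous_const.mul hc)).intervalIntegrable _ _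
      · simp
    rw [e] at h0
    have hc2 : c * (x - y) = f x - f y := by rw [hcdef]; field_simp
    have h5 : 2 * c * (f x - f y) - c ^ 2 * (x - y) = (f x - f y) ^ 2 / (x - y) := by
      rw [← hc2]; field_simp; ring
    have h6 : (f x - f y) ^ 2 / (x - y) ≤ ∫ t in y..x, f' t ^ 2 := by linarith
    rw [div_le_iff₀ hxy] at h6
    linarith
  have hT : x - y ≤ T := by linarith [hx.2, hy.1]
  have hT0 : 0 ≤ T := hx.1.trans hx.2
  calc _ ≤ _ := hCS
    _ ≤ T * ∫ t in y..x, f' t ^ 2 := by gcongr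
    _ ≤ _ := by gcongr

lemma lim_zero_aux {f f' : ℝ → ℝ} {M l : ℝ} (hf : ∀ s, HasDerivAt f (f' s) s)
    (hb : ∀ s, 0 ≤ s → |f s| ≤ M) (hl : Tendsto f' atTop (nhds l)) : l ≤ 0 := by
  by_contra hcon
  push Not at hcon
  obtain ⟨N, hN⟩ := eventually_atTop.1 (hl.eventually (lt_mem_nhds (half_lt_self hcon)))
  set N' := max N 0
  have hmv : ∀ s, N' ≤ s → l / 2 * (s - N') ≤ f s - f N' := by
    intro s hs
    apply Convex.mul_sub_le_image_sub_of_le_deriv (convex_Ici N')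
      (continuous_iff_continuousAt.2 fun s => (hf s).continuousAt).continuousOn
      (fun x _ => (hf x).differentiableAt.differentiableWithinAt) _ N' (mem_Ici.2 le_rfl) s hs hs
    intro x hx
    rw [interior_Ici] at hx
    rw [(hf x).deriv]
    exact (hN x ((le_max_left _ _).trans (le_of_lt hx))).le
  have hM : 0 ≤ M := (abs_nonneg _).trans (hb 0 le_rfl)
  have hN0 : 0 ≤ N' := le_max_right _ _
  have hs : N' ≤ N' + (4 * M + 2) / l := by
    have : 0 ≤ (4 * M + 2) / l := by positivity
    linarith
  have h1 := hmv _ hs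
  have h2 := abs_le.1 (hb _ (hN0.trans hs))
  have h3 := abs_le.1 (hb _ hN0)
  have h4 : l / 2 * (N' + (4 * M + 2) / l - N') = 2 * M + 1 := by field_simp; ring
  linarith [h2.2, h3.1]

lemma lim_zero {f f' : ℝ → ℝ} {M l : ℝ} (hf : ∀ s, HasDerivAt f (f' s) s)
    (hb : ∀ s, 0 ≤ s → |f s| ≤ M) (hl : Tendsto f' atTop (nhds l)) : l = 0 := by
  refine le_antisymm (lim_zero_aux hf hb hl) ?_
  have := lim_zero_aux (f := fun s => - f s) (f' := fun s => - f' s) (M := M) (fun s => (hf s).neg)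
    (fun s h => by simpa using hb s h) hl.neg
  linarith

lemma hasDerivAt_param {F : ℝ × ℝ → ℝ} (hF : ContDiff ℝ 1 F) (T s : ℝ) :
    HasDerivAt (fun s => ∫ t in (0:ℝ)..T, F (s, t))
      (∫ t in (0:ℝ)..T, fderiv ℝ F (s, t) (1, 0)) s := by
  have hc : Continuous (fun p : ℝ × ℝ => fderiv ℝ F p (1, 0)) :=
    (hF.continuous_fderiv one_ne_zero).clm_apply continuous_const
  obtain ⟨C, hC⟩ := ((isCompact_Icc (a := s - 1) (b := s + 1)).prod
    (isCompact_uIcc (a := (0:ℝ)) (b := T))).exists_bound_of_continuousOn hc.continuousOn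
  have hFc := hF.continuous
  refine (intervalIntegral.hasDerivAt_integral_of_dominated_loc_of_deriv_le
    (F' := fun s t => fderiv ℝ F (s, t) (1, 0)) (bound := fun _ => C)
    (Icc_mem_nhds (by linarith) (by linarith) : Icc (s - 1) (s + 1) ∈ nhds s) ?_ ?_ ?_ ?_ ?_ ?_).2
  · exact Eventually.of_forall fun x => (by fun_prop : Continuous fun t => F (x, t)).aestronglyMeasurable
  · exact (by fun_prop : Continuous fun t => F (s, t)).intervalIntegrable _ _
  · exact (hc.comp (by fun_prop : Continuous fun t : ℝ => (s, t))).aestronglyMeasurable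
  · exact Eventually.of_forall fun t ht x hx => hC (x, t) ⟨hx, uIoc_subset_uIcc ht⟩
  · simp
  · refine Eventually.of_forall fun t ht x hx => ?_
    have h1 := (hF.differentiable one_ne_zero (x, t)).hasFDerivAt
    have h2 : HasDerivAt (fun x : ℝ => (x, t)) ((1, 0) : ℝ × ℝ) x :=
      (hasDerivAt_id x).prodMk (hasDerivAt_const x t)
    exact h1.comp_hasDerivAt x h2

lemma const_of_hasDerivAt_zero {f : ℝ → ℝ} (hf : ∀ s, HasDerivAt f 0 s) (x y : ℝ) : f x = f y :=
  is_const_of_deriv_eq_zero (fun s => (hf s).differentiableAt) (fun s => (hf s).deriv) x y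

lemma abs_log_cosh_sub (s : ℝ) (hs : 0 ≤ s) : |log (cosh s) - s| ≤ log 2 := by
  have h1 : s ≤ log (cosh s) + log 2 := by
    rw [← log_mul (cosh_pos s).ne' two_ne_zero, le_log_iff_exp_le (by have := cosh_pos s; positivity)]
    rw [cosh_eq]; have := exp_pos (-s); linarith
  have h2 : log (cosh s) ≤ s := by
    rw [log_le_iff_le_exp (cosh_pos s), cosh_eq]
    have : exp (-s) ≤ exp s := exp_le_exp.2 (by linarith)
    linarith
  have h3 : 0 ≤ log 2 := log_nonneg (by norm_num)
  rw [abs_le]; constructor <;> linarith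

lemma ode_class {a Λ : ℝ} (ha : 0 < a) {u v u1 v1 : ℝ → ℝ}
    (hu : ∀ s, HasDerivAt u (u1 s) s) (hv : ∀ s, HasDerivAt v (v1 s) s)
    (hu1 : ∀ s, HasDerivAt u1 (2 * exp (4 * u s) * v1 s ^ 2) s)
    (hv1 : ∀ s, HasDerivAt v1 (-4 * (u1 s * v1 s)) s)
    (hb : ∀ s, |u s - log (cosh s)| ≤ Λ)
    (hN : Tendsto v atBot (nhds a)) (hS : Tendsto v atTop (nhds (-a))) :
    ∃ b ∈ Ioo (-1 : ℝ) 1, ∀ s,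
      exp (2 * u s) = (cosh (2 * s) - b * sinh (2 * s)) / (2 * a * √(1 - b ^ 2)) ∧
      v s = a * (b * cosh (2 * s) - sinh (2 * s)) / (cosh (2 * s) - b * sinh (2 * s)) := by
  -- first conserved quantity
  have hc : ∀ s, exp (4 * u s) * v1 s = exp (4 * u 0) * v1 0 := by
    intro s
    refine const_of_hasDerivAt_zero (f := fun s => exp (4 * u s) * v1 s) (fun s => ?_) s 0
    refine ((((hu s).const_mul 4).exp).mul (hv1 s)).congr_deriv ?_
    ring
  set c := exp (4 * u 0) * v1 0 with hcdef
  -- second conserved quantity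
  have hk : ∀ s, u1 s - 2 * c * v s = u1 0 - 2 * c * v 0 := by
    intro s
    refine const_of_hasDerivAt_zero (f := fun s => u1 s - 2 * c * v s) (fun s => ?_) s 0
    refine ((hu1 s).sub ((hv s).const_mul (2 * c))).congr_deriv ?_
    rw [← hc s]; ring
  set k := u1 0 - 2 * c * v 0 with hkdef
  have hu1' : ∀ s, u1 s = 2 * c * v s + k := fun s => by linarith [hk s]
  have limS : Tendsto u1 atTop (nhds (2 * c * (-a) + k)) := by
    rw [funext hu1']
    exact (hS.const_mul (2 * c)).add_const k
  have limN : Tendsto u1 atBot (nhds (2 * c * a + k)) := by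
    rw [funext hu1']
    exact (hN.const_mul (2 * c)).add_const k
  have eS : 2 * c * (-a) + k - 1 = 0 := by
    refine lim_zero (f := fun s => u s - s) (f' := fun s => u1 s - 1) (M := Λ + log 2)
      (fun s => (hu s).sub (hasDerivAt_id s)) (fun s hs => ?_) (limS.sub_const 1)
    have h1 := abs_log_cosh_sub s hs
    have h2 := hb s
    have : u s - s = (u s - log (cosh s)) + (log (cosh s) - s) := by ring
    rw [this]
    exact (abs_add_le _ _).trans (add_le_add h2 h1)
  have eN : -(2 * c * a + k) - 1 = 0 := by
    refine lim_zero (f := fun s => u (-s) - s) (f' := fun s => - u1 (-s) - 1) (M := Λ + log 2)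
      (fun s => ?_) (fun s hs => ?_) ((limN.comp tendsto_neg_atTop_atBot).neg.sub_const 1)
    · refine (((hu (-s)).comp s (hasDerivAt_neg s)).sub (hasDerivAt_id s)).congr_deriv ?_
      ring
    have h1 := abs_log_cosh_sub s hs
    have h2 := hb (-s)
    rw [cosh_neg] at h2
    have : u (-s) - s = (u (-s) - log (cosh s)) + (log (cosh s) - s) := by ring
    rw [this]
    exact (abs_add_le _ _).trans (add_le_add h2 h1)
  have k0 : k = 0 := by linarith
  have ca : 2 * c * a = -1 := by linarith
  have hvu : ∀ s, v s = -a * u1 s := fun s => by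
    rw [hu1' s, k0]; linear_combination (v s) * ca
  -- energy
  have hE : ∀ s t, u1 s ^ 2 + c ^ 2 * exp (-(4 * u s)) = u1 t ^ 2 + c ^ 2 * exp (-(4 * u t)) := by
    intro s t
    refine const_of_hasDerivAt_zero (f := fun s => u1 s ^ 2 + c ^ 2 * exp (-(4 * u s)))
      (fun s => ?_) s t
    refine (((hu1 s).pow 2).add (((((hu s).const_mul 4).neg).exp).const_mul (c ^ 2))).congr_deriv ?_
    rw [← hc s]
    have e : exp (-(4 * u s)) * exp (4 * u s) = 1 := by rw [← exp_add]; simp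
    simp only [Pi.neg_apply]
    push_cast
    linear_combination (-4 * exp (4 * u s) * v1 s ^ 2 * u1 s) * e
  have hutop : Tendsto u atTop atTop := by
    refine tendsto_atTop_mono' atTop (f₁ := fun s => s - (Λ + log 2)) ?_
      (tendsto_atTop_add_const_right atTop (-(Λ + log 2)) tendsto_id)
    filter_upwards [eventually_ge_atTop 0] with s hs
    have h1 := (abs_le.1 (abs_log_cosh_sub s hs)).1
    have h2 := (abs_le.1 (hb s)).1
    linarith
  have hE1 : ∀ s, u1 s ^ 2 + c ^ 2 * exp (-(4 * u s)) = 1 := by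
    intro s
    have l1 : Tendsto (fun t => u1 t ^ 2 + c ^ 2 * exp (-(4 * u t))) atTop
        (nhds ((2 * c * (-a) + k) ^ 2 + c ^ 2 * 0)) :=
      (limS.pow 2).add ((tendsto_exp_neg_atTop_nhds_zero.comp
        (hutop.const_mul_atTop (by norm_num : (0:ℝ) < 4))).const_mul (c ^ 2))
    have l2 := tendsto_nhds_unique l1
      ((tendsto_const_nhds (x := u1 s ^ 2 + c ^ 2 * exp (-(4 * u s)))).congr (fun t => hE s t))
    rw [← l2, show 2 * c * (-a) + k = 1 by linarith]; ring
  -- linear equation for exp (2u)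
  have hx : ∀ s, HasDerivAt (fun s => exp (2 * u s)) (2 * (u1 s * exp (2 * u s))) s := fun s =>
    (((hu s).const_mul 2).exp).congr_deriv (by ring)
  have hy : ∀ s, HasDerivAt (fun s => u1 s * exp (2 * u s)) (2 * exp (2 * u s)) s := fun s => by
    refine ((hu1 s).mul (hx s)).congr_deriv ?_
    have e := hE1 s
    have e2 : exp (4 * u s) * v1 s ^ 2 = c ^ 2 * exp (-(4 * u s)) := by
      rw [← hc s]
      have e : exp (-(4 * u s)) * exp (4 * u s) = 1 := by rw [← exp_add]; simp
      linear_combination (-exp (4 * u s) * v1 s ^ 2) * e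
    linear_combination (2 * exp (2 * u s)) * e + (2 * exp (2 * u s)) * e2
  have hch : ∀ s, HasDerivAt (fun s : ℝ => cosh (2 * s)) (2 * sinh (2 * s)) s := fun s =>
    (((hasDerivAt_id s).const_mul 2).cosh).congr_deriv (by simp; ring)
  have hsh : ∀ s, HasDerivAt (fun s : ℝ => sinh (2 * s)) (2 * cosh (2 * s)) s := fun s =>
    (((hasDerivAt_id s).const_mul 2).sinh).congr_deriv (by simp; ring)
  have hp : ∀ s, exp (2 * u s) * cosh (2 * s) - u1 s * exp (2 * u s) * sinh (2 * s)
      = exp (2 * u 0) := by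
    intro s
    have := const_of_hasDerivAt_zero
      (f := fun s => exp (2 * u s) * cosh (2 * s) - u1 s * exp (2 * u s) * sinh (2 * s))
      (fun s => (((hx s).mul (hch s)).sub ((hy s).mul (hsh s))).congr_deriv (by ring)) s 0
    simpa using this
  have hq : ∀ s, u1 s * exp (2 * u s) * cosh (2 * s) - exp (2 * u s) * sinh (2 * s)
      = u1 0 * exp (2 * u 0) := by
    intro s
    have := const_of_hasDerivAt_zero
      (f := fun s => u1 s * exp (2 * u s) * cosh (2 * s) - exp (2 * u s) * sinh (2 * s))
      (fun s => (((hy s).mul (hch s)).sub ((hx s).mul (hsh s))).congr_deriv (by ring)) s 0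
    simpa using this
  set p := exp (2 * u 0) with hpdef
  have hp0 : 0 < p := exp_pos _
  have cs : ∀ s : ℝ, cosh (2 * s) ^ 2 - sinh (2 * s) ^ 2 = 1 := fun s => by
    have := cosh_sq (2 * s); linarith
  have X : ∀ s, exp (2 * u s) = p * (cosh (2 * s) + u1 0 * sinh (2 * s)) := fun s => by
    linear_combination cosh (2 * s) * hp s + sinh (2 * s) * hq s - exp (2 * u s) * cs s
  have Y : ∀ s, u1 s * exp (2 * u s) = p * (sinh (2 * s) + u1 0 * cosh (2 * s)) := fun s => by
    linear_combination sinh (2 * s) * hp s + cosh (2 * s) * hq s - u1 s * exp (2 * u s) * cs s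
  have hc0 : c ≠ 0 := by rintro h; rw [h] at ca; norm_num at ca
  have hp2 : exp (4 * u 0) = p ^ 2 := by rw [hpdef, ← exp_nat_mul]; congr 1; push_cast; ring
  have hE0 : (1 - u1 0 ^ 2) * p ^ 2 = c ^ 2 := by
    have := hE1 0
    rw [exp_neg, hp2] at this
    field_simp at this
    linarith
  have hc2 : 0 < c ^ 2 := by positivity
  have hb1 : 0 < 1 - u1 0 ^ 2 := by
    by_contra h
    push Not at h
    nlinarith [sq_nonneg p]
  have hbm := abs_lt.1 ((sq_lt_one_iff_abs_lt_one (u1 0)).1 (by linarith))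
  have hsq : 2 * a * √(1 - u1 0 ^ 2) * p = 1 := by
    have h1 : √(1 - u1 0 ^ 2) * p = -c := by
      refine (pow_left_inj₀ (by positivity) ?_ two_ne_zero).1 ?_
      · by_contra h; push Not at h
        have : 0 < c * a := mul_pos (by linarith) ha
        linarith
      · rw [mul_pow, sq_sqrt hb1.le, hE0]; ring
    rw [mul_assoc, h1]; linarith
  refine ⟨-u1 0, ⟨by linarith [hbm.2], by linarith [hbm.1]⟩, fun s => ?_⟩
  have hX := X s
  have hpos : 0 < cosh (2 * s) + u1 0 * sinh (2 * s) := by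
    have := exp_pos (2 * u s)
    rw [hX] at this
    exact pos_of_mul_pos_right this hp0.le
  have hs0 : 0 < √(1 - u1 0 ^ 2) := sqrt_pos.2 hb1
  rw [neg_sq]
  constructor
  · rw [hX, eq_div_iff (by positivity)]
    linear_combination (cosh (2 * s) + u1 0 * sinh (2 * s)) * hsq
  · have hne : cosh (2 * s) - -u1 0 * sinh (2 * s) ≠ 0 := by
      have : cosh (2 * s) - -u1 0 * sinh (2 * s) = cosh (2 * s) + u1 0 * sinh (2 * s) := by ring
      rw [this]; exact hpos.ne'
    rw [eq_div_iff hne, hvu s]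
    have h := Y s
    rw [hX] at h
    have h' : u1 s * (cosh (2 * s) + u1 0 * sinh (2 * s)) = sinh (2 * s) + u1 0 * cosh (2 * s) := by
      apply mul_left_cancel₀ hp0.ne'
      linear_combination h
    linear_combination (-a) * h'

lemma uab_th {a b s x : ℝ} (ha : 0 < a) (hb : b ∈ Ioo (-1 : ℝ) 1)
    (hx : exp (2 * x) = (cosh (2 * s) - b * sinh (2 * s)) / (2 * a * √(1 - b ^ 2))) :
    x = uab a b (th s) := by
  have hb2 : 0 < 1 - b ^ 2 := by nlinarith [hb.1, hb.2]
  have hs0 : 0 < √(1 - b ^ 2) := sqrt_pos.2 hb2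
  have hc := cosh_pos s
  have hD : 0 < cosh (2 * s) - b * sinh (2 * s) := by
    have := exp_pos (2 * x)
    rw [hx] at this
    by_contra h
    push Not at h
    have := div_nonpos_of_nonpos_of_nonneg h (by positivity : 0 ≤ 2 * a * √(1 - b ^ 2))
    linarith
  have e : 1 + cos (th s) ^ 2 + 2 * b * cos (th s)
      = (cosh (2 * s) - b * sinh (2 * s)) / cosh s ^ 2 := by
    rw [cos_th, cosh_two_mul, sinh_two_mul]
    field_simp
    ring
  have h2 : 2 * x = log ((cosh (2 * s) - b * sinh (2 * s)) / (2 * a * √(1 - b ^ 2))) := by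
    rw [← hx, log_exp]
  unfold uab
  rw [e, sin_th, one_div, log_inv, log_div (by positivity) (by positivity),
    log_div hD.ne' (by positivity), log_pow]
  rw [log_div hD.ne' (by positivity)] at h2
  push_cast
  linarith

lemma vab_th {a b s : ℝ} :
    a * (b * cosh (2 * s) - sinh (2 * s)) / (cosh (2 * s) - b * sinh (2 * s)) = vab a b (th s) := by
  have hc := cosh_pos s
  have e : 1 + cos (th s) ^ 2 + 2 * b * cos (th s)
      = (cosh (2 * s) - b * sinh (2 * s)) / cosh s ^ 2 := by
    rw [cos_th, cosh_two_mul, sinh_two_mul]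
    field_simp
    ring
  have e2 : a * (b + b * cos (th s) ^ 2 + 2 * cos (th s))
      = a * (b * cosh (2 * s) - sinh (2 * s)) / cosh s ^ 2 := by
    rw [cos_th, cosh_two_mul, sinh_two_mul]
    field_simp
    ring
  unfold vab
  rw [e, e2, div_div_div_cancel_right₀ (by positivity)]

/-- derivative in the first variable -/
def dS (F : ℝ × ℝ → ℝ) : ℝ × ℝ → ℝ := fun p => fderiv ℝ F p (1, 0)

/-- derivative in the second variable -/
def dT (F : ℝ × ℝ → ℝ) : ℝ × ℝ → ℝ := fun p => fderiv ℝ F p (0, 1)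

lemma contDiff_dS {F : ℝ × ℝ → ℝ} (hF : ContDiff ℝ 2 F) : ContDiff ℝ 1 (dS F) :=
  (hF.fderiv_right (m := 1) (by norm_num)).clm_apply contDiff_const

lemma contDiff_dT {F : ℝ × ℝ → ℝ} (hF : ContDiff ℝ 2 F) : ContDiff ℝ 1 (dT F) :=
  (hF.fderiv_right (m := 1) (by norm_num)).clm_apply contDiff_const

lemma hasDerivAt_dS {F : ℝ × ℝ → ℝ} (hF : ContDiff ℝ 1 F) (s t : ℝ) :
    HasDerivAt (fun s => F (s, t)) (dS F (s, t)) s := by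
  have h1 := (hF.differentiable one_ne_zero (s, t)).hasFDerivAt
  have h2 : HasDerivAt (fun x : ℝ => (x, t)) ((1, 0) : ℝ × ℝ) s :=
    (hasDerivAt_id s).prodMk (hasDerivAt_const s t)
  exact h1.comp_hasDerivAt s h2

lemma hasDerivAt_dT {F : ℝ × ℝ → ℝ} (hF : ContDiff ℝ 1 F) (s t : ℝ) :
    HasDerivAt (fun t => F (s, t)) (dT F (s, t)) t := by
  have h1 := (hF.differentiable one_ne_zero (s, t)).hasFDerivAt
  have h2 : HasDerivAt (fun x : ℝ => (s, x)) ((0, 1) : ℝ × ℝ) t :=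
    (hasDerivAt_const t s).prodMk (hasDerivAt_id t)
  exact h1.comp_hasDerivAt t h2

lemma dS_shift (F : ℝ × ℝ → ℝ) (e : ℝ × ℝ) : dS (fun p => F (p + e)) = fun p => dS F (p + e) := by
  funext p; simp [dS, fderiv_comp_add_right]

lemma dT_shift (F : ℝ × ℝ → ℝ) (e : ℝ × ℝ) : dT (fun p => F (p + e)) = fun p => dT F (p + e) := by
  funext p; simp [dT, fderiv_comp_add_right]

/-- the harmonic map system on the cylinder -/
def HarmCyl (U V : ℝ × ℝ → ℝ) : Prop := ∀ p,
  dS (dS U) p + dT (dT U) p = 2 * exp (4 * U p) * (dS V p ^ 2 + dT V p ^ 2) ∧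
  dS (dS V) p + dT (dT V) p = -4 * (dS U p * dS V p + dT U p * dT V p)

lemma HarmCyl.shift {U V : ℝ × ℝ → ℝ} (h : HarmCyl U V) (e : ℝ × ℝ) :
    HarmCyl (fun p => U (p + e)) (fun p => V (p + e)) := by
  intro p
  simp only [dS_shift, dT_shift]
  exact h (p + e)

lemma contDiff_Qf {U V W Z : ℝ × ℝ → ℝ} (hU : ContDiff ℝ 2 U) (hV : ContDiff ℝ 2 V)
    (hW : ContDiff ℝ 2 W) (hZ : ContDiff ℝ 2 Z) :
    ContDiff ℝ 2 (fun p => Qf (U p) (V p) (W p) (Z p)) := by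
  unfold Qf
  fun_prop

lemma subharm {U V W Z : ℝ × ℝ → ℝ} (hU : ContDiff ℝ 2 U) (hV : ContDiff ℝ 2 V)
    (hW : ContDiff ℝ 2 W) (hZ : ContDiff ℝ 2 Z) (h1 : HarmCyl U V) (h2 : HarmCyl W Z)
    (p : ℝ × ℝ) :
    0 ≤ dS (dS (fun p => Qf (U p) (V p) (W p) (Z p))) p
      + dT (dT (fun p => Qf (U p) (V p) (W p) (Z p))) p := by
  have hQ := contDiff_Qf hU hV hW hZ
  have h12 : (1 : WithTop ℕ∞) ≤ 2 := by norm_num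
  have eS : dS (fun p => Qf (U p) (V p) (W p) (Z p)) = fun p =>
      Q1f (U p) (V p) (W p) (Z p) (dS U p) (dS V p) (dS W p) (dS Z p) := by
    funext ⟨s, t⟩
    exact (hasDerivAt_dS (hQ.of_le h12) s t).unique
      (hasDerivAt_Qf (hasDerivAt_dS (hU.of_le h12) s t) (hasDerivAt_dS (hV.of_le h12) s t)
        (hasDerivAt_dS (hW.of_le h12) s t) (hasDerivAt_dS (hZ.of_le h12) s t))
  have eT : dT (fun p => Qf (U p) (V p) (W p) (Z p)) = fun p =>
      Q1f (U p) (V p) (W p) (Z p) (dT U p) (dT V p) (dT W p) (dT Z p) := by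
    funext ⟨s, t⟩
    exact (hasDerivAt_dT (hQ.of_le h12) s t).unique
      (hasDerivAt_Qf (hasDerivAt_dT (hU.of_le h12) s t) (hasDerivAt_dT (hV.of_le h12) s t)
        (hasDerivAt_dT (hW.of_le h12) s t) (hasDerivAt_dT (hZ.of_le h12) s t))
  obtain ⟨s, t⟩ := p
  have eSS : dS (dS (fun p => Qf (U p) (V p) (W p) (Z p))) (s, t) = _ :=
    ((hasDerivAt_dS (contDiff_dS hQ) s t).congr_of_eventuallyEq
      (Eventually.of_forall fun x => (congrFun eS (x, t)).symm)).unique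
    (hasDerivAt_Q1f (hasDerivAt_dS (hU.of_le h12) s t) (hasDerivAt_dS (hV.of_le h12) s t)
      (hasDerivAt_dS (hW.of_le h12) s t) (hasDerivAt_dS (hZ.of_le h12) s t)
      (hasDerivAt_dS (contDiff_dS hU) s t) (hasDerivAt_dS (contDiff_dS hV) s t)
      (hasDerivAt_dS (contDiff_dS hW) s t) (hasDerivAt_dS (contDiff_dS hZ) s t))
  have eTT : dT (dT (fun p => Qf (U p) (V p) (W p) (Z p))) (s, t) = _ :=
    ((hasDerivAt_dT (contDiff_dT hQ) s t).congr_of_eventuallyEq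
      (Eventually.of_forall fun x => (congrFun eT (s, x)).symm)).unique
    (hasDerivAt_Q1f (hasDerivAt_dT (hU.of_le h12) s t) (hasDerivAt_dT (hV.of_le h12) s t)
      (hasDerivAt_dT (hW.of_le h12) s t) (hasDerivAt_dT (hZ.of_le h12) s t)
      (hasDerivAt_dT (contDiff_dT hU) s t) (hasDerivAt_dT (contDiff_dT hV) s t)
      (hasDerivAt_dT (contDiff_dT hW) s t) (hasDerivAt_dT (contDiff_dT hZ) s t))
  rw [eSS, eTT]
  have n1 := Q2f_nonneg (U (s, t)) (V (s, t)) (W (s, t)) (Z (s, t))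
    (dS U (s, t)) (dS V (s, t)) (dS W (s, t)) (dS Z (s, t))
  have n2 := Q2f_nonneg (U (s, t)) (V (s, t)) (W (s, t)) (Z (s, t))
    (dT U (s, t)) (dT V (s, t)) (dT W (s, t)) (dT Z (s, t))
  refine (add_nonneg n1 n2).trans_eq ?_
  obtain ⟨a1, a2⟩ := h1 (s, t)
  obtain ⟨b1, b2⟩ := h2 (s, t)
  unfold Q2f
  generalize exp (2 * U (s, t) - 2 * W (s, t)) = k1 at *
  generalize exp (2 * W (s, t) - 2 * U (s, t)) = k2 at *
  generalize exp (2 * U (s, t) + 2 * W (s, t)) = k3 at *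
  linear_combination (-(k1 - k2) - 4 * k3 * (V (s, t) - Z (s, t)) ^ 2) * a1
    + ((k1 - k2) - 4 * k3 * (V (s, t) - Z (s, t)) ^ 2) * b1
    - (4 * k3 * (V (s, t) - Z (s, t))) * a2 + (4 * k3 * (V (s, t) - Z (s, t))) * b2

lemma half_line {Q : ℝ × ℝ → ℝ} (hQ : ContDiff ℝ 2 Q) {T : ℝ} (hT : 0 ≤ T)
    (hper : ∀ s t, Q (s, t + T) = Q (s, t)) (hsub : ∀ p, 0 ≤ dS (dS Q) p + dT (dT Q) p) (s0 : ℝ) :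
    (∀ s, s0 ≤ s → ∫ t in (0:ℝ)..T, Q (s0, t) ≤ ∫ t in (0:ℝ)..T, Q (s, t)) ∨
    (∀ s, s ≤ s0 → ∫ t in (0:ℝ)..T, Q (s0, t) ≤ ∫ t in (0:ℝ)..T, Q (s, t)) := by
  refine convex_half (fun s => ∫ t in (0:ℝ)..T, Q (s, t)) (fun s => ∫ t in (0:ℝ)..T, dS Q (s, t))
    (fun s => ∫ t in (0:ℝ)..T, dS (dS Q) (s, t))
    (fun s => hasDerivAt_param (hQ.of_le (by norm_num)) T s)
    (fun s => hasDerivAt_param (contDiff_dS hQ) T s) (fun s => ?_) s0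
  have cSS : Continuous (dS (dS Q)) :=
    ((contDiff_dS hQ).continuous_fderiv one_ne_zero).clm_apply continuous_const
  have cTT : Continuous (dT (dT Q)) :=
    ((contDiff_dT hQ).continuous_fderiv one_ne_zero).clm_apply continuous_const
  have i1 : IntervalIntegrable (fun t => dS (dS Q) (s, t)) volume 0 T :=
    (cSS.comp (by fun_prop : Continuous fun t : ℝ => (s, t))).intervalIntegrable _ _
  have i2 : IntervalIntegrable (fun t => dT (dT Q) (s, t)) volume 0 T :=
    (cTT.comp (by fun_prop : Continuous fun t : ℝ => (s, t))).intervalIntegrable _ _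
  have z : ∫ t in (0:ℝ)..T, dT (dT Q) (s, t) = 0 := by
    rw [intervalIntegral.integral_eq_sub_of_hasDerivAt
      (fun t _ => hasDerivAt_dT (contDiff_dT hQ) s t) i2]
    have e : (fun p => Q (p + (0, T))) = Q := by
      funext ⟨x, y⟩; simpa using hper x y
    have := dT_shift Q (0, T)
    rw [e] at this
    have h := congrFun this (s, 0)
    simp at h
    rw [h]; ring
  have : 0 ≤ ∫ t in (0:ℝ)..T, (dS (dS Q) (s, t) + dT (dT Q) (s, t)) :=
    intervalIntegral.integral_nonneg hT fun t _ => hsub (s, t)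
  rw [intervalIntegral.integral_add i1 i2, z, add_zero] at this
  exact this

lemma Qf_nonneg (u v w z : ℝ) : 0 ≤ Qf u v w z := by
  have h : Qf u v w z = (cosh (2 * u - 2 * w) - 1) + 2 * exp (2 * u + 2 * w) * (v - z) ^ 2 := by
    unfold Qf; rw [cosh_eq, neg_sub]
  rw [h]
  have := one_le_cosh (2 * u - 2 * w)
  have : 0 ≤ 2 * exp (2 * u + 2 * w) * (v - z) ^ 2 := by positivity
  linarith

lemma Qf_eq_zero {u v w z : ℝ} (h0 : Qf u v w z = 0) : w = u ∧ z = v := by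
  have h : Qf u v w z = (cosh (2 * u - 2 * w) - 1) + 2 * exp (2 * u + 2 * w) * (v - z) ^ 2 := by
    unfold Qf; rw [cosh_eq, neg_sub]
  rw [h] at h0
  have h1 := one_le_cosh (2 * u - 2 * w)
  have h2 : 0 ≤ 2 * exp (2 * u + 2 * w) * (v - z) ^ 2 := by positivity
  constructor
  · by_contra hne
    have : 1 < cosh (2 * u - 2 * w) := one_lt_cosh.2 (fun h => hne (by linarith))
    linarith
  · have h3 : 2 * exp (2 * u + 2 * w) * (v - z) ^ 2 = 0 := by linarith
    have := exp_pos (2 * u + 2 * w)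
    have h4 : (v - z) ^ 2 = 0 := by
      rcases mul_eq_zero.1 h3 with h | h
      · linarith
      · exact h
    have := pow_eq_zero_iff (two_ne_zero) |>.1 h4
    linarith

lemma Qf_bound {f g f' g' : ℝ → ℝ} {T h Λ : ℝ} (hT : 0 < T)
    (hf : ∀ x, HasDerivAt f (f' x) x) (hg : ∀ x, HasDerivAt g (g' x) x)
    (hf' : Continuous f') (hg' : Continuous g')
    (pf : ∀ x, f (x + T) = f x) (pg : ∀ x, g (x + T) = g x)
    (hb : ∀ x, |f x - h| ≤ Λ) (x y : ℝ) :
    Qf (f x) (g x) (f y) (g y) ≤ (2 * exp (8 * Λ ^ 2) + 2 * exp (8 * Λ)) * T *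
      ∫ t in (0:ℝ)..T, (f' t ^ 2 + exp (4 * f t) * g' t ^ 2) := by
  have hper : Function.Periodic (fun t => (f t, g t)) T := fun t => by simp [pf, pg]
  obtain ⟨x', hx', ex⟩ := hper.exists_mem_Ico₀ hT x
  obtain ⟨y', hy', ey⟩ := hper.exists_mem_Ico₀ hT y
  simp only [Prod.mk.injEq] at ex ey
  rw [ex.1, ex.2, ey.1, ey.2]
  have hx := Ico_subset_Icc_self hx'
  have hy := Ico_subset_Icc_self hy'
  have hfc : Continuous f := continuous_iff_continuousAt.2 fun s => (hf s).continuousAt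
  have A := sq_sub_le hf hf' hx hy
  have B := sq_sub_le hg hg' hx hy
  have i1 : IntervalIntegrable (fun t => f' t ^ 2) volume 0 T :=
    (by fun_prop : Continuous fun t => f' t ^ 2).intervalIntegrable _ _
  have i2 : IntervalIntegrable (fun t => exp (4 * f t) * g' t ^ 2) volume 0 T :=
    (by fun_prop : Continuous fun t => exp (4 * f t) * g' t ^ 2).intervalIntegrable _ _
  have i3 : IntervalIntegrable (fun t => g' t ^ 2) volume 0 T :=
    (by fun_prop : Continuous fun t => g' t ^ 2).intervalIntegrable _ _
  rw [intervalIntegral.integral_add i1 i2]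
  set I := ∫ t in (0:ℝ)..T, f' t ^ 2
  set J := ∫ t in (0:ℝ)..T, exp (4 * f t) * g' t ^ 2
  have hI : 0 ≤ I := intervalIntegral.integral_nonneg hT.le fun t _ => sq_nonneg _
  have hJ : 0 ≤ J := intervalIntegral.integral_nonneg hT.le fun t _ => by positivity
  have bx := abs_le.1 (hb x')
  have bY := abs_le.1 (hb y')
  have h2 : exp (2 * f x' + 2 * f y') * (g x' - g y') ^ 2 ≤ exp (8 * Λ) * T * J := by
    have h3 : exp (4 * h - 4 * Λ) * ∫ t in (0:ℝ)..T, g' t ^ 2 ≤ J := by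
      rw [← intervalIntegral.integral_const_mul]
      refine intervalIntegral.integral_mono_on hT.le (i3.const_mul _) i2 fun t _ => ?_
      have bt := abs_le.1 (hb t)
      gcongr
      linarith [bt.1]
    have h4 : exp (2 * f x' + 2 * f y') ≤ exp (8 * Λ) * exp (4 * h - 4 * Λ) := by
      rw [← exp_add]
      apply exp_le_exp.2
      linarith [bx.2, bY.2]
    calc exp (2 * f x' + 2 * f y') * (g x' - g y') ^ 2
        ≤ (exp (8 * Λ) * exp (4 * h - 4 * Λ)) * (T * ∫ t in (0:ℝ)..T, g' t ^ 2) := by gcongr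
      _ = exp (8 * Λ) * T * (exp (4 * h - 4 * Λ) * ∫ t in (0:ℝ)..T, g' t ^ 2) := by ring
      _ ≤ _ := by gcongr
  have h1 : cosh (2 * f x' - 2 * f y') - 1 ≤ 2 * exp (8 * Λ ^ 2) * T * I := by
    have c1 := cosh_le_exp_half_sq (2 * f x' - 2 * f y')
    have e1 : (2 * f x' - 2 * f y') ^ 2 / 2 = 2 * (f x' - f y') ^ 2 := by ring
    rw [e1] at c1
    set d := 2 * (f x' - f y') ^ 2 with hd
    have hd0 : 0 ≤ d := by positivity
    have c2 : exp d - 1 ≤ d * exp d := by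
      have := add_one_le_exp (-d)
      have e2 : exp (-d) * exp d = 1 := by rw [← exp_add]; simp
      nlinarith [exp_pos d]
    have c3 : d ≤ 8 * Λ ^ 2 := by
      have : (f x' - f y') ^ 2 ≤ (2 * Λ) ^ 2 := sq_le_sq' (by linarith [bx.1, bY.2]) (by linarith [bx.2, bY.1])
      rw [hd]; linarith
    have c4 : d ≤ 2 * (T * I) := by rw [hd]; linarith
    calc _ ≤ exp d - 1 := by linarith
      _ ≤ d * exp d := c2
      _ ≤ (2 * (T * I)) * exp (8 * Λ ^ 2) := by gcongr
      _ = _ := by ring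
  have e : Qf (f x') (g x') (f y') (g y') = (cosh (2 * f x' - 2 * f y') - 1)
      + 2 * (exp (2 * f x' + 2 * f y') * (g x' - g y') ^ 2) := by
    unfold Qf; rw [cosh_eq, neg_sub]; ring
  rw [e]
  have p1 : 0 ≤ exp (8 * Λ ^ 2) * T * J := by positivity
  have p2 : 0 ≤ exp (8 * Λ) * T * I := by positivity
  nlinarith

/-- pull-back to the cylinder -/
def cyl (f : ℝ → ℝ → ℝ) : ℝ × ℝ → ℝ := fun p => f (th p.1) p.2

lemma contDiff_cyl {f : ℝ → ℝ → ℝ}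
    (hf : ContDiffOn ℝ 2 (fun p : ℝ × ℝ => f p.1 p.2) (Ioo 0 π ×ˢ (univ : Set ℝ))) :
    ContDiff ℝ 2 (cyl f) := by
  have h : ContDiff ℝ 2 (fun p : ℝ × ℝ => (th p.1, p.2)) :=
    (contDiff_th.comp contDiff_fst).prodMk contDiff_snd
  rw [← contDiffOn_univ]
  exact hf.comp h.contDiffOn (fun p _ => ⟨th_mem p.1, mem_univ _⟩)

lemma slice_contDiffOn {f : ℝ → ℝ → ℝ}
    (hf : ContDiffOn ℝ 2 (fun p : ℝ × ℝ => f p.1 p.2) (Ioo 0 π ×ˢ (univ : Set ℝ))) (t : ℝ) :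
    ContDiffOn ℝ 2 (fun x => f x t) (Ioo 0 π) := by
  have h : ContDiff ℝ 2 (fun x : ℝ => (x, t)) := contDiff_id.prodMk contDiff_const
  exact hf.comp h.contDiffOn (fun x hx => ⟨hx, mem_univ _⟩)

lemma hasDerivAt_slice {f : ℝ → ℝ → ℝ}
    (hf : ContDiffOn ℝ 2 (fun p : ℝ × ℝ => f p.1 p.2) (Ioo 0 π ×ˢ (univ : Set ℝ))) (t : ℝ)
    {θ : ℝ} (hθ : θ ∈ Ioo 0 π) : HasDerivAt (fun x => f x t) (pdθ f θ t) θ :=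
  (((slice_contDiffOn hf t).differentiableOn two_ne_zero).differentiableAt
    (isOpen_Ioo.mem_nhds hθ)).hasDerivAt

lemma hasDerivAt_slice2 {f : ℝ → ℝ → ℝ}
    (hf : ContDiffOn ℝ 2 (fun p : ℝ × ℝ => f p.1 p.2) (Ioo 0 π ×ˢ (univ : Set ℝ))) (t : ℝ)
    {θ : ℝ} (hθ : θ ∈ Ioo 0 π) : HasDerivAt (fun x => pdθ f x t) (pdθ (pdθ f) θ t) θ := by
  have h := (slice_contDiffOn hf t).deriv_of_isOpen isOpen_Ioo (m := 1) (by norm_num)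
  exact ((h.differentiableOn one_ne_zero).differentiableAt (isOpen_Ioo.mem_nhds hθ)).hasDerivAt

lemma dS_cyl {f : ℝ → ℝ → ℝ}
    (hf : ContDiffOn ℝ 2 (fun p : ℝ × ℝ => f p.1 p.2) (Ioo 0 π ×ˢ (univ : Set ℝ))) (s t : ℝ) :
    dS (cyl f) (s, t) = sin (th s) * pdθ f (th s) t := by
  have h1 := hasDerivAt_dS ((contDiff_cyl hf).of_le (by norm_num)) s t
  have h2 := (hasDerivAt_slice hf t (th_mem s)).comp s (hasDerivAt_th s)
  rw [h1.unique h2]; ring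

lemma dT_cyl {f : ℝ → ℝ → ℝ}
    (hf : ContDiffOn ℝ 2 (fun p : ℝ × ℝ => f p.1 p.2) (Ioo 0 π ×ˢ (univ : Set ℝ))) (s t : ℝ) :
    dT (cyl f) (s, t) = pdφ f (th s) t :=
  (hasDerivAt_dT ((contDiff_cyl hf).of_le (by norm_num)) s t).deriv.symm

lemma lap_cyl {f : ℝ → ℝ → ℝ}
    (hf : ContDiffOn ℝ 2 (fun p : ℝ × ℝ => f p.1 p.2) (Ioo 0 π ×ˢ (univ : Set ℝ))) (s t : ℝ) :
    dS (dS (cyl f)) (s, t) + dT (dT (cyl f)) (s, t) = sin (th s) ^ 2 * lapS2 f (th s) t := by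
  have hF := contDiff_cyl hf
  have eT : dT (dT (cyl f)) (s, t) = pdφ (pdφ f) (th s) t := by
    rw [← (hasDerivAt_dT (contDiff_dT hF) s t).deriv]
    unfold pdφ
    congr 1
    funext x
    exact dT_cyl hf s x
  have eS : dS (dS (cyl f)) (s, t) = cos (th s) * sin (th s) * pdθ f (th s) t
      + sin (th s) * (pdθ (pdθ f) (th s) t * sin (th s)) := by
    have h1 := hasDerivAt_dS (contDiff_dS hF) s t
    have h2 := ((hasDerivAt_th s).sin).mul
      ((hasDerivAt_slice2 hf t (th_mem s)).comp s (hasDerivAt_th s))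
    have h3 := h2.congr_of_eventuallyEq (Eventually.of_forall fun x => dS_cyl hf x t)
    exact h1.unique h3
  have := sin_th_pos s
  rw [eS, eT, lapS2]
  field_simp
  ring

lemma harm_cyl {ub vb : ℝ → ℝ → ℝ}
    (hreg1 : ContDiffOn ℝ 2 (fun p : ℝ × ℝ => ub p.1 p.2) (Ioo 0 π ×ˢ (univ : Set ℝ)))
    (hreg2 : ContDiffOn ℝ 2 (fun p : ℝ × ℝ => vb p.1 p.2) (Ioo 0 π ×ˢ (univ : Set ℝ)))
    (heq : ∀ θ ∈ Ioo (0 : ℝ) π, ∀ φ : ℝ,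
      lapS2 ub θ φ = 2 * Real.exp (4 * ub θ φ) * gradNormSqS2 vb θ φ ∧
      lapS2 vb θ φ = -4 * gradDotS2 ub vb θ φ) : HarmCyl (cyl ub) (cyl vb) := by
  rintro ⟨s, t⟩
  obtain ⟨h1, h2⟩ := heq (th s) (th_mem s) t
  have := sin_th_pos s
  rw [lap_cyl hreg1, lap_cyl hreg2, dS_cyl hreg1, dS_cyl hreg2, dT_cyl hreg1, dT_cyl hreg2, h1, h2]
  simp only [gradNormSqS2, gradDotS2, cyl]
  constructor <;> field_simp

lemma not_int {E : ℝ → ℝ} (hE : IntegrableOn E (Ioo 0 π)) {c : ℝ} (hc : 0 < c) (s0 : ℝ)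
    (h : (∀ s, s0 ≤ s → c ≤ sin (th s) * E (th s)) ∨ (∀ s, s ≤ s0 → c ≤ sin (th s) * E (th s))) :
    False := by
  have h0 := th_mem s0
  rcases h with h | h
  · have hi : IntervalIntegrable (fun x => (x - π)⁻¹) volume (th s0) π := by
      rw [intervalIntegrable_iff_integrableOn_Ioo_of_le h0.2.le]
      have hE' : IntegrableOn (fun x => c⁻¹ * E x) (Ioo (th s0) π) :=
        (hE.mono_set (Ioo_subset_Ioo_left h0.1.le)).const_mul _
      refine Integrable.mono' hE' ?_ ?_
      · exact (by fun_prop : Measurable fun x : ℝ => (x - π)⁻¹).aestronglyMeasurable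
      · refine (ae_restrict_mem measurableSet_Ioo).mono fun x hx => ?_
        obtain ⟨s, rfl⟩ := th_surj ⟨h0.1.trans hx.1, hx.2⟩
        have h1 := h s (th_strictMono.le_iff_le.1 hx.1.le)
        have h2 := sin_th_pos s
        have h3 : 0 < π - th s := by linarith [hx.2]
        have h4 : sin (th s) ≤ π - th s := by rw [← sin_pi_sub]; exact sin_le h3.le
        rw [norm_eq_abs, abs_inv, abs_sub_comm, abs_of_pos h3]
        have hEp : 0 < E (th s) := pos_of_mul_pos_right (hc.trans_le h1) h2.le
        rw [inv_le_iff_one_le_mul₀ h3]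
        have : c ≤ E (th s) * (π - th s) := by nlinarith
        rw [mul_assoc, inv_mul_eq_div, le_div_iff₀ hc]; linarith
    rw [intervalIntegrable_sub_inv_iff] at hi
    rcases hi with hi | hi
    · exact h0.2.ne hi
    · exact hi right_mem_uIcc
  · have hi : IntervalIntegrable (fun x => x⁻¹) volume 0 (th s0) := by
      rw [intervalIntegrable_iff_integrableOn_Ioo_of_le h0.1.le]
      have hE' : IntegrableOn (fun x => c⁻¹ * E x) (Ioo 0 (th s0)) :=
        (hE.mono_set (Ioo_subset_Ioo_right h0.2.le)).const_mul _
      refine Integrable.mono' hE' ?_ ?_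
      · exact (by fun_prop : Measurable fun x : ℝ => x⁻¹).aestronglyMeasurable
      · refine (ae_restrict_mem measurableSet_Ioo).mono fun x hx => ?_
        obtain ⟨s, rfl⟩ := th_surj ⟨hx.1, hx.2.trans h0.2⟩
        have h1 := h s (th_strictMono.le_iff_le.1 hx.2.le)
        have h2 := sin_th_pos s
        have h3 : 0 < th s := hx.1
        have h4 : sin (th s) ≤ th s := sin_le h3.le
        rw [norm_eq_abs, abs_inv, abs_of_pos h3]
        have hEp : 0 < E (th s) := pos_of_mul_pos_right (hc.trans_le h1) h2.le
        rw [inv_le_iff_one_le_mul₀ h3]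
        have : c ≤ E (th s) * th s := by nlinarith
        rw [mul_assoc, inv_mul_eq_div, le_div_iff₀ hc]; linarith
    rw [intervalIntegrable_inv_iff] at hi
    rcases hi with hi | hi
    · exact h0.1.ne hi
    · exact hi left_mem_uIcc

lemma energy_bound {ub vb : ℝ → ℝ → ℝ}
    (hreg1 : ContDiffOn ℝ 2 (fun p : ℝ × ℝ => ub p.1 p.2) (Ioo 0 π ×ˢ (univ : Set ℝ)))
    (hreg2 : ContDiffOn ℝ 2 (fun p : ℝ × ℝ => vb p.1 p.2) (Ioo 0 π ×ˢ (univ : Set ℝ))) (s : ℝ) :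
    ∫ t in (0:ℝ)..(2 * π), (dT (cyl ub) (s, t) ^ 2
      + exp (4 * cyl ub (s, t)) * dT (cyl vb) (s, t) ^ 2) ≤
    sin (th s) * ∫ t in Ioo (0:ℝ) (2 * π),
      (gradNormSqS2 (fun θ φ => ub θ φ + Real.log (Real.sin θ)) (th s) t
          + Real.exp (4 * ub (th s) t) * gradNormSqS2 vb (th s) t) * Real.sin (th s) := by
  have hs := sin_th_pos s
  have hpi := pi_pos
  have hU := contDiff_cyl hreg1
  have hV := contDiff_cyl hreg2
  have c1 := (contDiff_dS hU).continuous
  have c2 := (contDiff_dT hU).continuous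
  have c3 := (contDiff_dS hV).continuous
  have c4 := (contDiff_dT hV).continuous
  have c5 := hU.continuous
  have e : ∀ t, (gradNormSqS2 (fun θ φ => ub θ φ + Real.log (Real.sin θ)) (th s) t
          + Real.exp (4 * ub (th s) t) * gradNormSqS2 vb (th s) t) * Real.sin (th s)
      = (((dS (cyl ub) (s, t) + cos (th s)) ^ 2 + dT (cyl ub) (s, t) ^ 2)
        + exp (4 * cyl ub (s, t)) * (dS (cyl vb) (s, t) ^ 2 + dT (cyl vb) (s, t) ^ 2))
        / sin (th s) := by
    intro t
    have g1 : pdθ (fun θ φ => ub θ φ + Real.log (Real.sin θ)) (th s) t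
        = pdθ ub (th s) t + cos (th s) / sin (th s) :=
      ((hasDerivAt_slice hreg1 t (th_mem s)).add
        ((Real.hasDerivAt_sin (th s)).log hs.ne')).deriv
    have g2 : pdφ (fun θ φ => ub θ φ + Real.log (Real.sin θ)) (th s) t = pdφ ub (th s) t := by
      simp [pdφ]
    simp only [gradNormSqS2, gradDotS2, g1, g2]
    rw [dS_cyl hreg1, dS_cyl hreg2, dT_cyl hreg1, dT_cyl hreg2]
    simp only [cyl]
    field_simp
  simp_rw [e]
  rw [← integral_Ioc_eq_integral_Ioo, ← intervalIntegral.integral_of_le (by positivity),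
    ← intervalIntegral.integral_const_mul]
  refine intervalIntegral.integral_mono_on (by positivity) ?_ ?_ fun t _ => ?_
  · exact (by fun_prop : Continuous fun t => (dT (cyl ub) (s, t) ^ 2
      + exp (4 * cyl ub (s, t)) * dT (cyl vb) (s, t) ^ 2)).intervalIntegrable _ _
  · exact Continuous.intervalIntegrable (by fun_prop) _ _
  · rw [mul_div_cancel₀ _ hs.ne']
    have h1 : 0 ≤ (dS (cyl ub) (s, t) + cos (th s)) ^ 2 := sq_nonneg _
    have h2 : 0 ≤ exp (4 * cyl ub (s, t)) * dS (cyl vb) (s, t) ^ 2 := by positivity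
    linarith

lemma tendsto_th_atBot : Tendsto th atBot (nhdsWithin 0 (Ioi 0)) := by
  refine tendsto_nhdsWithin_iff.2 ⟨?_, Eventually.of_forall fun s => (th_mem s).1⟩
  have h := ((continuous_arctan.tendsto 0).comp tendsto_exp_atBot).const_mul 2
  rw [arctan_zero, mul_zero] at h
  exact h

lemma tendsto_th_atTop : Tendsto th atTop (nhdsWithin π (Iio π)) := by
  refine tendsto_nhdsWithin_iff.2 ⟨?_, Eventually.of_forall fun s => (th_mem s).2⟩
  have h := ((tendsto_arctan_atTop.mono_right nhdsWithin_le_nhds).comp tendsto_exp_atTop).const_mul 2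
  rw [mul_div_cancel₀ π two_ne_zero] at h
  exact h

/-- Theorem `thm:classification-non-degeneracy`, first part:
classification of singular harmonic maps from `S²∖{N,S}` to `ℍ²` with
extreme-Kerr-type singularities: they all equal `(u_{a,b}, v_{a,b})` for some
`b ∈ (−1,1)`; in particular they are axisymmetric. -/
theorem statement_1
    (Λ a : ℝ) (hΛ : 1 ≤ Λ) (ha : 0 < a)
    (ub vb : ℝ → ℝ → ℝ)
    (hreg1 : ContDiffOn ℝ 2 (fun p : ℝ × ℝ => ub p.1 p.2) (Ioo 0 π ×ˢ (univ : Set ℝ)))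
    (hreg2 : ContDiffOn ℝ 2 (fun p : ℝ × ℝ => vb p.1 p.2) (Ioo 0 π ×ˢ (univ : Set ℝ)))
    (hper1 : ∀ θ φ : ℝ, ub θ (φ + 2 * π) = ub θ φ)
    (hper2 : ∀ θ φ : ℝ, vb θ (φ + 2 * π) = vb θ φ)
    (hext : ∃ G : ℝ → ℝ → ℝ,
      ContinuousOn (fun p : ℝ × ℝ => G p.1 p.2) (Icc 0 π ×ˢ (univ : Set ℝ)) ∧
      (∀ θ ∈ Ioo (0 : ℝ) π, ∀ φ : ℝ, G θ φ = ub θ φ + Real.log (Real.sin θ)) ∧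
      (∀ θ ∈ Icc (0 : ℝ) π, ∀ φ : ℝ, |G θ φ| ≤ Λ))
    (heq : ∀ θ ∈ Ioo (0 : ℝ) π, ∀ φ : ℝ,
      lapS2 ub θ φ = 2 * Real.exp (4 * ub θ φ) * gradNormSqS2 vb θ φ ∧
      lapS2 vb θ φ = -4 * gradDotS2 ub vb θ φ)
    (hen : IntegrableOn (fun p : ℝ × ℝ =>
        (gradNormSqS2 (fun θ φ => ub θ φ + Real.log (Real.sin θ)) p.1 p.2
          + Real.exp (4 * ub p.1 p.2) * gradNormSqS2 vb p.1 p.2) * Real.sin p.1)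
        (Ioo 0 π ×ˢ Ioo 0 (2 * π)) volume)
    (htrN : ∀ φ : ℝ, Tendsto (fun θ => vb θ φ) (nhdsWithin 0 (Ioi 0)) (nhds a))
    (htrS : ∀ φ : ℝ, Tendsto (fun θ => vb θ φ) (nhdsWithin π (Iio π)) (nhds (-a))) :
    ∃ b ∈ Ioo (-1 : ℝ) 1, ∀ θ ∈ Ioo (0 : ℝ) π, ∀ φ : ℝ,
      ub θ φ = uab a b θ ∧ vb θ φ = vab a b θ := by
  have hpi := pi_pos
  obtain ⟨G, -, hG1, hG2⟩ := hext
  have hU := contDiff_cyl hreg1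
  have hV := contDiff_cyl hreg2
  have hH := harm_cyl hreg1 hreg2 heq
  have h12 : (1 : WithTop ℕ∞) ≤ 2 := by norm_num
  have hb : ∀ s t, |cyl ub (s, t) - log (cosh s)| ≤ Λ := by
    intro s t
    have h1 := hG2 (th s) (Ioo_subset_Icc_self (th_mem s)) t
    rw [hG1 (th s) (th_mem s) t, sin_th, one_div, log_inv] at h1
    exact h1
  -- integrated energy
  set E : ℝ → ℝ := fun θ => ∫ t in Ioo (0:ℝ) (2 * π),
      (gradNormSqS2 (fun θ φ => ub θ φ + Real.log (Real.sin θ)) θ t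
          + Real.exp (4 * ub θ t) * gradNormSqS2 vb θ t) * Real.sin θ with hEdef
  have hE : IntegrableOn E (Ioo 0 π) := by
    rw [IntegrableOn, Measure.volume_eq_prod, ← Measure.prod_restrict] at hen
    exact hen.integral_prod_left
  -- axisymmetry
  have hax : ∀ s α, cyl ub (s, α) = cyl ub (s, 0) ∧ cyl vb (s, α) = cyl vb (s, 0) := by
    intro s0 α
    set W : ℝ × ℝ → ℝ := fun p => cyl ub (p + (0, α)) with hWdef
    set Z : ℝ × ℝ → ℝ := fun p => cyl vb (p + (0, α)) with hZdef
    have hW : ContDiff ℝ 2 W := hU.comp (contDiff_id.add contDiff_const)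
    have hZ : ContDiff ℝ 2 Z := hV.comp (contDiff_id.add contDiff_const)
    set Q : ℝ × ℝ → ℝ := fun p => Qf (cyl ub p) (cyl vb p) (W p) (Z p) with hQdef
    have hQ : ContDiff ℝ 2 Q := contDiff_Qf hU hV hW hZ
    have hQper : ∀ s t, Q (s, t + 2 * π) = Q (s, t) := by
      intro s t
      have e1 : t + 2 * π + α = (t + α) + 2 * π := by ring
      simp only [hQdef, hWdef, hZdef, Prod.mk_add_mk, cyl, e1, hper1, hper2]
    have hhalf := half_line hQ (by positivity : 0 ≤ 2 * π) hQper
      (subharm hU hV hW hZ hH (hH.shift (0, α))) s0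
    set C := (2 * exp (8 * Λ ^ 2) + 2 * exp (8 * Λ)) * (2 * π) with hC
    have hCpos : 0 < C := by positivity
    have hQle : ∀ s t, Q (s, t) ≤ C * (sin (th s) * E (th s)) := by
      intro s t
      have h1 := Qf_bound (f := fun t => cyl ub (s, t)) (g := fun t => cyl vb (s, t))
        (T := 2 * π) (h := log (cosh s)) (Λ := Λ) (by positivity)
        (fun x => hasDerivAt_dT (hU.of_le h12) s x) (fun x => hasDerivAt_dT (hV.of_le h12) s x)
        ((contDiff_dT hU).continuous.comp (by fun_prop))
        ((contDiff_dT hV).continuous.comp (by fun_prop))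
        (fun x => hper1 _ _) (fun x => hper2 _ _) (fun x => hb s x) t (t + α)
      have h2 := energy_bound hreg1 hreg2 s
      have h3 : Q (s, t) = Qf (cyl ub (s, t)) (cyl vb (s, t)) (cyl ub (s, t + α))
          (cyl vb (s, t + α)) := by simp [hQdef, hWdef, hZdef]
      rw [h3]
      exact h1.trans (mul_le_mul_of_nonneg_left h2 hCpos.le)
    have hQc : ∀ s, Continuous fun t => Q (s, t) := fun s => hQ.continuous.comp (by fun_prop)
    have hPle : ∀ s, ∫ t in (0:ℝ)..(2 * π), Q (s, t) ≤ 2 * π * (C * (sin (th s) * E (th s))) := by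
      intro s
      have := intervalIntegral.integral_mono_on (by positivity : (0:ℝ) ≤ 2 * π)
        ((hQc s).intervalIntegrable _ _)
        (continuous_const.intervalIntegrable (μ := volume) 0 (2 * π)) (fun t _ => hQle s t)
      rw [intervalIntegral.integral_const, sub_zero, smul_eq_mul] at this
      exact this
    have hP0 : ∫ t in (0:ℝ)..(2 * π), Q (s0, t) = 0 := by
      by_contra hne
      have hpos : 0 < ∫ t in (0:ℝ)..(2 * π), Q (s0, t) :=
        lt_of_le_of_ne (intervalIntegral.integral_nonneg (by positivity)
          fun t _ => Qf_nonneg _ _ _ _) (Ne.symm hne)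
      set m := ∫ t in (0:ℝ)..(2 * π), Q (s0, t)
      have key : ∀ s, m ≤ ∫ t in (0:ℝ)..(2 * π), Q (s, t) →
          m / (2 * π * C) ≤ sin (th s) * E (th s) := by
        intro s h
        rw [div_le_iff₀ (by positivity)]
        have := h.trans (hPle s)
        linarith
      refine not_int hE (c := m / (2 * π * C)) (by positivity) s0 ?_
      rcases hhalf with h | h
      · exact Or.inl fun s hs => key s (h s hs)
      · exact Or.inr fun s hs => key s (h s hs)
    have hQ0 : Q (s0, 0) = 0 := by
      by_contra hne
      have : 0 < ∫ t in (0:ℝ)..(2 * π), Q (s0, t) :=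
        intervalIntegral.integral_pos (by positivity) (hQc s0).continuousOn
          (fun t _ => Qf_nonneg _ _ _ _)
          ⟨0, ⟨le_rfl, by positivity⟩, lt_of_le_of_ne (Qf_nonneg _ _ _ _) (Ne.symm hne)⟩
      exact this.ne' hP0
    have := Qf_eq_zero hQ0
    simpa [hWdef, hZdef] using this
  -- reduction to an ODE
  have zU : dT (cyl ub) = fun _ => 0 := by
    funext ⟨s, t⟩
    refine (hasDerivAt_dT (hU.of_le h12) s t).unique ?_
    rw [show (fun t => cyl ub (s, t)) = fun _ => cyl ub (s, 0) from funext fun t => (hax s t).1]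
    exact hasDerivAt_const _ _
  have zV : dT (cyl vb) = fun _ => 0 := by
    funext ⟨s, t⟩
    refine (hasDerivAt_dT (hV.of_le h12) s t).unique ?_
    rw [show (fun t => cyl vb (s, t)) = fun _ => cyl vb (s, 0) from funext fun t => (hax s t).2]
    exact hasDerivAt_const _ _
  have zz : dT (fun _ => (0:ℝ)) = fun _ => 0 := by
    funext p; simp [dT]
  obtain ⟨b, hbm, hfin⟩ := ode_class (a := a) (Λ := Λ) ha (u := fun s => cyl ub (s, 0))
    (v := fun s => cyl vb (s, 0)) (u1 := fun s => dS (cyl ub) (s, 0))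
    (v1 := fun s => dS (cyl vb) (s, 0))
    (fun s => hasDerivAt_dS (hU.of_le h12) s 0) (fun s => hasDerivAt_dS (hV.of_le h12) s 0)
    (fun s => by
      refine (hasDerivAt_dS (contDiff_dS hU) s 0).congr_deriv ?_
      have := (hH (s, 0)).1
      rw [zU, zV, zz] at this
      simpa using this)
    (fun s => by
      refine (hasDerivAt_dS (contDiff_dS hV) s 0).congr_deriv ?_
      have := (hH (s, 0)).2
      rw [zU, zV, zz] at this
      simpa using this)
    (fun s => hb s 0) ((htrN 0).comp tendsto_th_atBot) ((htrS 0).comp tendsto_th_atTop)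
  refine ⟨b, hbm, fun θ hθ φ => ?_⟩
  obtain ⟨s, rfl⟩ := th_surj hθ
  obtain ⟨f1, f2⟩ := hfin s
  obtain ⟨g1, g2⟩ := hax s φ
  constructor
  · exact g1.trans (uab_th ha hbm f1)
  · exact g2.trans (f2.trans vab_th)
end
end

section
/- Fix a > 0 and b ∈ (−1,1). Suppose φ₁ ∈ C²(S²) and φ₂ ∈ C²(S²) with φ₂(N) = φ₂(S) = 0 and ∫_{S²} e^{4u_{a,b}} ( |∇_{g₀}φ₂|² + φ₂² ) dvol_{g₀} < ∞, and suppose that on S²∖{N,S} the linearized harmonic map equations hold: Δ_{g₀}φ₁ − 8 e^{4u_{a,b}} |∇_{g₀}v_{a,b}|² φ₁ − 4 e^{4u_{a,b}} ∇_{g₀}v_{a,b}·∇_{g₀}φ₂ = 0 and Δ_{g₀}φ₂ + 4 ∇_{g₀}u_{a,b}·∇_{g₀}φ₂ + 4 ∇_{g₀}v_{a,b}·∇_{g₀}φ₁ = 0. Then there exists λ ∈ ℝ such that for all (θ,φ): φ₁ = λ·( b/(2(1−b²)) + cosθ/(1 + cos²θ + 2b·cosθ) ) and φ₂ = λ·a·sin⁴θ/(1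 + cos²θ + 2b·cosθ)². In other words, the space of such Jacobi fields is one-dimensional, generated by (∂_b u_{a,b}, ∂_b v_{a,b}). -/
open Real MeasureTheory Set Filter

noncomputable section

lemma deriv2_line {f : ℂ → ℝ} (hf : ContDiff ℝ 2 f) (γ : ℝ → ℂ) (e : ℂ)
    (hγ : ∀ t, HasDerivAt γ e t) (t : ℝ) :
    deriv (deriv (fun x => f (γ x))) t = fderiv ℝ (fderiv ℝ f) (γ t) e e := by
  have h1 : deriv (fun x => f (γ x)) = fun x => fderiv ℝ f (γ x) e := by
    funext x
    have := (hf.differentiable (by norm_num) (γ x)).hasFDerivAt.comp_hasDerivAt x (hγ x)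
    exact this.deriv
  rw [h1]
  have hf2 : ContDiff ℝ 1 (fderiv ℝ f) := hf.fderiv_right (by norm_num)
  have h2 := (hf2.differentiable (by norm_num) (γ t)).hasFDerivAt.comp_hasDerivAt t (hγ t)
  have h3 := h2.clm_apply (hasDerivAt_const t e)
  simpa using h3.deriv

lemma cyl_liouville (W : ℝ → ℝ → ℝ) (hW : ContDiff ℝ 2 (fun p : ℝ × ℝ => W p.1 p.2))
    (C : ℝ) (hC : ∀ h φ, |W h φ| ≤ C)
    (hL : ∀ h φ, deriv (deriv (fun x => W x φ)) h + deriv (deriv (fun y => W h y)) φ = 0)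
    (h φ h' φ' : ℝ) : W h φ = W h' φ' := by
  set f : ℂ → ℝ := fun z => W z.re z.im with hfdef
  have hf : ContDiff ℝ 2 f := by
    have : ContDiff ℝ 2 (fun z : ℂ => ((z.re, z.im) : ℝ × ℝ)) :=
      (Complex.reCLM.contDiff).prodMk (Complex.imCLM.contDiff)
    exact hW.comp this
  have key := InnerProductSpace.bounded_harmonic_on_complex_plane_is_constant f ?_ ?_ ⟨h, φ⟩ ⟨h', φ'⟩
  · simpa [hfdef] using key
  · intro z _
    refine ⟨hf.contDiffAt, Eventually.of_forall fun z => ?_⟩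
    rw [InnerProductSpace.laplacian_eq_iteratedFDeriv_complexPlane]
    simp only [iteratedFDeriv_two_apply, Pi.zero_apply]
    have hz := hL z.re z.im
    have e1 := deriv2_line hf (fun x : ℝ => (x : ℂ) + z.im * Complex.I) 1
      (fun t => by simpa using ((hasDerivAt_id t).ofReal_comp).add_const ((z.im : ℂ) * Complex.I)) z.re
    have e2 := deriv2_line hf (fun x : ℝ => (z.re : ℂ) + x * Complex.I) Complex.I
      (fun t => by
        simpa using (((hasDerivAt_id t).ofReal_comp).mul_const Complex.I).const_add (z.re : ℂ)) z.im
    simp only [hfdef, Complex.add_re, Complex.ofReal_re, Complex.mul_re, Complex.I_re, mul_zero,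
      Complex.ofReal_im, Complex.I_im, mul_one, sub_self, add_zero, Complex.add_im, Complex.mul_im, zero_add,
      Complex.re_add_im] at e1 e2
    rw [e1, e2] at hz
    simpa using hz
  · rw [isBounded_iff_forall_norm_le]
    refine ⟨C, ?_⟩
    rintro _ ⟨z, rfl⟩
    exact hC _ _

lemma second_deriv_le_of_max {f : ℝ → ℝ} {x : ℝ} (hf : ContDiff ℝ 2 f) (hm : ∀ y, f y ≤ f x) :
    deriv (deriv f) x ≤ 0 := by
  by_contra! hcon
  have hd : deriv f x = 0 := IsLocalMax.deriv_eq_zero (Eventually.of_forall hm)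
  have hmin := isLocalMin_of_deriv_deriv_pos hcon hd hf.continuous.continuousAt
  have hc : f =ᶠ[nhds x] fun _ => f x := by
    filter_upwards [hmin] with y hy using le_antisymm (hm y) hy
  have := hc.deriv.deriv_eq
  simp at this
  linarith

lemma cosh_sq_hasDeriv2 (ε : ℝ) (h : ℝ) :
    deriv (deriv (fun x => ε * cosh x ^ 2)) h = ε * (4 * cosh h ^ 2 - 2) := by
  have h1 : deriv (fun x => ε * cosh x ^ 2) = fun x => ε * (2 * cosh x * sinh x) := by
    funext x
    have := (((hasDerivAt_cosh x).pow 2).const_mul ε).deriv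
    simp
  rw [h1]
  have := ((((hasDerivAt_cosh h).const_mul 2).mul (hasDerivAt_sinh h)).const_mul ε).deriv
  have h2 := cosh_sq h
  refine this.trans ?_
  have : sinh h ^ 2 = cosh h ^ 2 - 1 := by linarith
  linear_combination (2 * ε) * this

lemma cyl_max_aux (W : ℝ → ℝ → ℝ) (hW : ContDiff ℝ 2 (fun p : ℝ × ℝ => W p.1 p.2))
    (hper : ∀ h φ, W h (φ + 2 * π) = W h φ)
    (C : ℝ) (hC : ∀ h φ, |W h φ| ≤ C * cosh h)
    (hL : ∀ h φ, deriv (deriv (fun x => W x φ)) h + deriv (deriv (fun y => W h y)) φ = 4 * W h φ)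
    (ε : ℝ) (hε : 0 < ε) (h φ : ℝ) : W h φ ≤ ε * cosh h ^ 2 := by
  by_contra! hcon
  set g : ℝ × ℝ → ℝ := fun p => W p.1 p.2 - ε * cosh p.1 ^ 2 with hg
  have hgc : Continuous g := by
    have := hW.continuous
    have := continuous_cosh
    fun_prop
  -- far away, `g < 0`
  have hfar : ∃ R : ℝ, ∀ x φ, R < |x| → g (x, φ) < 0 := by
    refine ⟨C / ε, fun x φ hx => ?_⟩
    have h1 : |x| < cosh x := by
      rw [← cosh_abs]
      have a1 := self_le_sinh_iff.2 (abs_nonneg x)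
      have a2 := sinh_lt_cosh |x|
      linarith
    have h2 := (abs_le.1 (hC x φ)).2
    have h3 : C < ε * cosh x := by
      rw [div_lt_iff₀ hε] at hx
      nlinarith
    have := cosh_pos x
    simp only [hg]
    nlinarith
  obtain ⟨R, hR⟩ := hfar
  have hredφ : ∀ y : ℝ, ∃ y' ∈ Icc 0 (2 * π), ∀ x', g (x', y) = g (x', y') := by
    intro y
    have hp : ∀ x', Function.Periodic (W x') (2 * π) := fun x' φ => hper x' φ
    refine ⟨toIcoMod two_pi_pos 0 y, ?_, fun x' => ?_⟩
    · have := toIcoMod_mem_Ico two_pi_pos 0 y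
      exact ⟨this.1, by simpa using this.2.le⟩
    · simp only [hg]
      congr 1
      have h1 : toIcoMod two_pi_pos 0 y = y - toIcoDiv two_pi_pos 0 y • (2 * π) := rfl
      rw [h1, (hp x').sub_zsmul_eq]
  have hpos : 0 < g (h, φ) := by simp only [hg]; linarith
  have hcomp : IsCompact (Icc (-R) R ×ˢ Icc 0 (2 * π)) := isCompact_Icc.prod isCompact_Icc
  have hin : ∀ x y, 0 ≤ g (x, y) → x ∈ Icc (-R) R := by
    intro x y hxy
    by_contra hx
    have : R < |x| := by
      by_contra! h'
      exact hx ⟨by linarith [neg_abs_le x], by linarith [le_abs_self x]⟩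
    linarith [hR x y this]
  obtain ⟨φ0, hφ0, hφ0'⟩ := hredφ φ
  obtain ⟨⟨x, y⟩, hxy, hmax⟩ := hcomp.exists_isMaxOn
    ⟨(h, φ0), ⟨hin h φ hpos.le, hφ0⟩⟩ hgc.continuousOn
  have hgpos : 0 < g (x, y) := by
    have := hmax (show (h, φ0) ∈ _ from ⟨hin h φ hpos.le, hφ0⟩)
    have h2 := hφ0' h
    simp only [mem_ofPred_eq] at this
    linarith
  have hglob : ∀ x' y', g (x', y') ≤ g (x, y) := by
    intro x' y'
    by_cases h0 : 0 ≤ g (x', y')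
    · obtain ⟨y'', hy'', he⟩ := hredφ y'
      rw [he x']
      exact hmax (show (x', y'') ∈ _ from ⟨hin x' y' h0, hy''⟩)
    · linarith
  have hgx : ContDiff ℝ 2 (fun t => W t y) := hW.comp (contDiff_id.prodMk contDiff_const)
  have hgy : ContDiff ℝ 2 (fun t => W x t) := hW.comp (contDiff_const.prodMk contDiff_id)
  have hcc : ContDiff ℝ 2 (fun t : ℝ => ε * cosh t ^ 2) := by
    have : ContDiff ℝ 2 cosh := contDiff_cosh
    fun_prop
  have s1 := second_deriv_le_of_max (f := fun t => W t y - ε * cosh t ^ 2) (x := x)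
    (hgx.sub hcc) (fun t => hglob t y)
  have s2 := second_deriv_le_of_max (f := fun t => W x t) (x := y) hgy
    (fun t => by have := hglob x t; simp only [hg] at this; linarith)
  have s3 : deriv (deriv (fun t => W t y - ε * cosh t ^ 2)) x =
      deriv (deriv (fun t => W t y)) x - deriv (deriv (fun t => ε * cosh t ^ 2)) x := by
    have : deriv (fun t => W t y - ε * cosh t ^ 2) =
        fun t => deriv (fun t => W t y) t - deriv (fun t => ε * cosh t ^ 2) t := by
      funext t
      exact deriv_fun_sub (hgx.differentiable (by norm_num) t) (hcc.differentiable (by norm_num) t)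
    rw [this]
    have d1 : ContDiff ℝ 1 (deriv (fun t => W t y)) := by
      have := (contDiff_succ_iff_deriv (n := 1)).1 (by simpa [one_add_one_eq_two] using hgx); exact this.2.2
    have d2 : ContDiff ℝ 1 (deriv (fun t : ℝ => ε * cosh t ^ 2)) := by
      have := (contDiff_succ_iff_deriv (n := 1)).1 (by simpa [one_add_one_eq_two] using hcc); exact this.2.2
    exact deriv_fun_sub (d1.differentiable (by norm_num) x) (d2.differentiable (by norm_num) x)
  rw [s3, cosh_sq_hasDeriv2] at s1
  have := hL x y
  simp only [hg] at hgpos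
  nlinarith

lemma cyl_max (W : ℝ → ℝ → ℝ) (hW : ContDiff ℝ 2 (fun p : ℝ × ℝ => W p.1 p.2))
    (hper : ∀ h φ, W h (φ + 2 * π) = W h φ)
    (C : ℝ) (hC : ∀ h φ, |W h φ| ≤ C * cosh h)
    (hL : ∀ h φ, deriv (deriv (fun x => W x φ)) h + deriv (deriv (fun y => W h y)) φ = 4 * W h φ)
    (h φ : ℝ) : W h φ = 0 := by
  have key : ∀ (W : ℝ → ℝ → ℝ), (∀ ε > 0, W h φ ≤ ε * cosh h ^ 2) → W h φ ≤ 0 := by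
    intro W hW
    by_contra! hc
    have h2 : 0 < cosh h ^ 2 := by have := cosh_pos h; positivity
    have := hW (W h φ / (2 * cosh h ^ 2)) (by positivity)
    have h3 : W h φ / (2 * cosh h ^ 2) * cosh h ^ 2 = W h φ / 2 := by field_simp
    linarith
  apply le_antisymm
  · exact key W fun ε hε => cyl_max_aux W hW hper C hC hL ε hε h φ
  · have := key (fun h φ => - W h φ) fun ε hε =>
      cyl_max_aux (fun h φ => - W h φ) hW.neg (fun h φ => by simp [hper]) C
        (fun h φ => by simpa using hC h φ) (fun h φ => by
          have e1 : (deriv fun x => - W x φ) = fun x => - deriv (fun x => W x φ) x := by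
            funext x; simp
          have e2 : (deriv fun x => - W h x) = fun x => - deriv (fun x => W h x) x := by
            funext x; simp
          rw [e1, e2]
          have := hL h φ
          simp only [deriv.fun_neg]
          linarith) ε hε h φ
    linarith

lemma comb2 {p q α β : ℝ → ℝ} (hp : ContDiff ℝ 2 p) (hq : ContDiff ℝ 2 q)
    (α' α'' β' β'' : ℝ → ℝ) (hα : ∀ x, HasDerivAt α (α' x) x) (hα' : ∀ x, HasDerivAt α' (α'' x) x)
    (hβ : ∀ x, HasDerivAt β (β' x) x) (hβ' : ∀ x, HasDerivAt β' (β'' x) x) (x : ℝ) :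
    deriv (deriv (fun t => p t * α t + q t * β t)) x =
      deriv (deriv p) x * α x + 2 * deriv p x * α' x + p x * α'' x +
      (deriv (deriv q) x * β x + 2 * deriv q x * β' x + q x * β'' x) := by
  have dd : ∀ {f : ℝ → ℝ}, ContDiff ℝ 2 f → (∀ t, HasDerivAt f (deriv f t) t) ∧
      ∀ t, HasDerivAt (deriv f) (deriv (deriv f) t) t := by
    intro f hf
    have d1 : ContDiff ℝ 1 (deriv f) := by
      have := (contDiff_succ_iff_deriv (n := 1)).1 (by simpa [one_add_one_eq_two] using hf)
      exact this.2.2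
    exact ⟨fun t => (hf.differentiable (by norm_num) t).hasDerivAt,
      fun t => (d1.differentiable (by norm_num) t).hasDerivAt⟩
  obtain ⟨p1, p2⟩ := dd hp
  obtain ⟨q1, q2⟩ := dd hq
  have e1 : deriv (fun t => p t * α t + q t * β t) = fun t =>
      (deriv p t * α t + p t * α' t) + (deriv q t * β t + q t * β' t) := by
    funext t
    exact (((p1 t).mul (hα t)).add ((q1 t).mul (hβ t))).deriv
  rw [e1]
  have := ((((p2 x).mul (hα x)).add ((p1 x).mul (hα' x))).add
    (((q2 x).mul (hβ x)).add ((q1 x).mul (hβ' x)))).deriv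
  refine this.trans ?_
  ring

def EE (b h : ℝ) : ℝ := cosh (2 * h) + b * sinh (2 * h)
def NN (b h : ℝ) : ℝ := sinh (2 * h) + b * cosh (2 * h)

lemma EE_deriv (b h : ℝ) : HasDerivAt (EE b) (2 * NN b h) h := by
  have h0 : HasDerivAt (fun x : ℝ => 2 * x) 2 h := by simpa using (hasDerivAt_id h).const_mul 2
  have := h0.cosh.add (h0.sinh.const_mul b)
  refine this.congr_deriv ?_
  simp only [NN]; ring

lemma NN_deriv (b h : ℝ) : HasDerivAt (NN b) (2 * EE b h) h := by
  have h0 : HasDerivAt (fun x : ℝ => 2 * x) 2 h := by simpa using (hasDerivAt_id h).const_mul 2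
  have := h0.sinh.add (h0.cosh.const_mul b)
  refine this.congr_deriv ?_
  simp only [EE]; ring

lemma EE_sq (b h : ℝ) : EE b h ^ 2 = NN b h ^ 2 + (1 - b ^ 2) := by
  have := cosh_sq (2 * h)
  simp only [EE, NN]
  linear_combination (1 - b ^ 2) * this

lemma EE_pos {b : ℝ} (hb : b ∈ Ioo (-1 : ℝ) 1) (h : ℝ) : 0 < EE b h := by
  have h1 : |sinh (2 * h)| < cosh (2 * h) := by
    rw [abs_sinh, ← cosh_abs]; exact sinh_lt_cosh _
  have h2 : |b * sinh (2 * h)| ≤ |sinh (2 * h)| := by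
    rw [abs_mul]
    have : |b| ≤ 1 := abs_le.2 ⟨hb.1.le, hb.2.le⟩
    nlinarith [abs_nonneg (sinh (2 * h))]
  have := neg_abs_le (b * sinh (2 * h))
  simp only [EE]; linarith

lemma EE_contDiff (b : ℝ) : ContDiff ℝ 2 (EE b) := by
  have h1 : ContDiff ℝ 2 cosh := contDiff_cosh
  have h2 : ContDiff ℝ 2 sinh := contDiff_sinh
  unfold EE; fun_prop

lemma NN_contDiff (b : ℝ) : ContDiff ℝ 2 (NN b) := by
  have h1 : ContDiff ℝ 2 cosh := contDiff_cosh
  have h2 : ContDiff ℝ 2 sinh := contDiff_sinh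
  unfold NN; fun_prop

lemma EE_inv_deriv {b : ℝ} (hb : b ∈ Ioo (-1 : ℝ) 1) (h : ℝ) :
    HasDerivAt (fun x => (EE b x)⁻¹) (-(2 * NN b h) / EE b h ^ 2) h :=
  (EE_deriv b h).inv (EE_pos hb h).ne'

lemma main_cyl (a b : ℝ) (ha : 0 < a) (hb : b ∈ Ioo (-1 : ℝ) 1) (P Q : ℝ → ℝ → ℝ)
    (hP : ContDiff ℝ 2 (fun p : ℝ × ℝ => P p.1 p.2))
    (hQ : ContDiff ℝ 2 (fun p : ℝ × ℝ => Q p.1 p.2))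
    (hPper : ∀ h φ, P h (φ + 2 * π) = P h φ) (hQper : ∀ h φ, Q h (φ + 2 * π) = Q h φ)
    (C : ℝ) (hCP : ∀ h φ, |P h φ| ≤ C) (hCQ : ∀ h φ, |Q h φ| * cosh h ≤ C)
    (h1 : ∀ h φ, deriv (deriv (fun x => P x φ)) h + deriv (deriv (fun y => P h y)) φ =
      8 * (1 - b ^ 2) / EE b h ^ 2 * P h φ + 2 / a * deriv (fun x => Q x φ) h)
    (h2 : ∀ h φ, deriv (deriv (fun x => Q x φ)) h + deriv (deriv (fun y => Q h y)) φ =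
      - 4 * (NN b h / EE b h) * deriv (fun x => Q x φ) h
        - 8 * a * (1 - b ^ 2) / EE b h ^ 2 * deriv (fun x => P x φ) h) :
    ∃ κ : ℝ, ∀ h φ, P h φ = κ * (NN b h / EE b h) ∧
      Q h φ = κ * (2 * a * (1 - b ^ 2) / EE b h ^ 2) := by
  have hw : 0 < 1 - b ^ 2 := by nlinarith [hb.1, hb.2]
  have hE := EE_pos hb
  have hPx : ∀ φ, ContDiff ℝ 2 (fun x => P x φ) := fun φ =>
    hP.comp (contDiff_id.prodMk contDiff_const)
  have hQx : ∀ φ, ContDiff ℝ 2 (fun x => Q x φ) := fun φ =>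
    hQ.comp (contDiff_id.prodMk contDiff_const)
  have hPy : ∀ h, ContDiff ℝ 2 (fun y => P h y) := fun h =>
    hP.comp (contDiff_const.prodMk contDiff_id)
  have hQy : ∀ h, ContDiff ℝ 2 (fun y => Q h y) := fun h =>
    hQ.comp (contDiff_const.prodMk contDiff_id)
  have hEc : ContDiff ℝ 2 (fun p : ℝ × ℝ => EE b p.1) := (EE_contDiff b).comp contDiff_fst
  have hNc : ContDiff ℝ 2 (fun p : ℝ × ℝ => NN b p.1) := (NN_contDiff b).comp contDiff_fst
  have hEic : ContDiff ℝ 2 (fun p : ℝ × ℝ => (EE b p.1)⁻¹) := hEc.inv (fun p => (hE p.1).ne')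
  have hQC : ∀ h φ, |Q h φ| ≤ C := fun h φ => by
    have := one_le_cosh h
    nlinarith [hCQ h φ, abs_nonneg (Q h φ)]
  have hC0 : 0 ≤ C := (abs_nonneg _).trans (hCP 0 0)
  have hNE : ∀ h, |NN b h * (EE b h)⁻¹| ≤ 1 := fun h => by
    rw [← div_eq_mul_inv, abs_div, abs_of_pos (hE h), div_le_one (hE h)]
    apply abs_le_of_sq_le_sq _ (hE h).le
    rw [EE_sq]; linarith
  -- tangential part
  set τ : ℝ → ℝ → ℝ := fun h φ => P h φ * (NN b h * (EE b h)⁻¹) + Q h φ * (1 / (2 * a)) with hτ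
  have hτL : ∀ h φ, deriv (deriv (fun x => τ x φ)) h + deriv (deriv (fun y => τ h y)) φ = 0 := by
    intro h φ
    have A := comb2 (hPx φ) (hQx φ) (α := fun h => NN b h * (EE b h)⁻¹)
      (fun h => 2 * (1 - b ^ 2) / EE b h ^ 2)
      (fun h => - 8 * (1 - b ^ 2) * NN b h / EE b h ^ 3) (β := fun _ => 1 / (2 * a))
      (fun _ => 0) (fun _ => 0)
      (fun x => by
        refine ((NN_deriv b x).mul (EE_inv_deriv hb x)).congr_deriv ?_
        have := (hE x).ne'
        have e := EE_sq b x
        field_simp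
        linear_combination e)
      (fun x => by
        have := (((EE_deriv b x).pow 2).inv (pow_ne_zero 2 (hE x).ne')).const_mul (2 * (1 - b ^ 2))
        refine (this.congr_deriv ?_).congr_of_eventuallyEq ?_
        · have := (hE x).ne'
          simp
          field_simp
          ring
        · exact Eventually.of_forall fun t => by simp [div_eq_mul_inv])
      (fun x => hasDerivAt_const _ _) (fun x => hasDerivAt_const _ _) h
    have B := comb2 (hPy h) (hQy h) (α := fun _ => NN b h * (EE b h)⁻¹) (fun _ => 0) (fun _ => 0)
      (β := fun _ => 1 / (2 * a)) (fun _ => 0) (fun _ => 0)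
      (fun x => hasDerivAt_const _ _) (fun x => hasDerivAt_const _ _)
      (fun x => hasDerivAt_const _ _) (fun x => hasDerivAt_const _ _) φ
    simp only [hτ]
    rw [A, B]
    have k1 := h1 h φ
    have k2 := h2 h φ
    have hEne := (hE h).ne'
    generalize deriv (deriv fun x => P x φ) h = Phh at *
    generalize deriv (deriv fun x => Q x φ) h = Qhh at *
    have k1' : deriv (deriv fun y => P h y) φ = 8 * (1 - b ^ 2) / EE b h ^ 2 * P h φ + 2 / a * deriv (fun x => Q x φ) h - Phh := by linarith
    have k2' : deriv (deriv fun y => Q h y) φ = - 4 * (NN b h / EE b h) * deriv (fun x => Q x φ) h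
        - 8 * a * (1 - b ^ 2) / EE b h ^ 2 * deriv (fun x => P x φ) h - Qhh := by linarith
    rw [k1', k2']
    field_simp
    ring
  have hτC : ContDiff ℝ 2 (fun p : ℝ × ℝ => τ p.1 p.2) :=
    (hP.mul (hNc.mul hEic)).add (hQ.mul contDiff_const)
  have hτB : ∀ h φ, |τ h φ| ≤ C + C * (1 / (2 * a)) := fun h φ => by
    refine (abs_add_le _ _).trans (add_le_add ?_ ?_)
    · rw [abs_mul]
      nlinarith [hNE h, hCP h φ, abs_nonneg (P h φ), abs_nonneg (NN b h * (EE b h)⁻¹)]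
    · rw [abs_mul, abs_of_pos (show 0 < 1 / (2 * a) by positivity)]
      exact mul_le_mul_of_nonneg_right (hQC h φ) (by positivity)
  have hconst := cyl_liouville τ hτC _ hτB hτL
  -- normal part
  set μ : ℝ → ℝ → ℝ := fun h φ =>
    P h φ * (-(1 - b ^ 2) * (EE b h)⁻¹) + Q h φ * (1 / (2 * a) * NN b h) with hμ
  have hμL : ∀ h φ, deriv (deriv (fun x => μ x φ)) h + deriv (deriv (fun y => μ h y)) φ
      = 4 * μ h φ := by
    intro h φ
    have A := comb2 (hPx φ) (hQx φ) (α := fun h => -(1 - b ^ 2) * (EE b h)⁻¹)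
      (fun h => (1 - b ^ 2) * (2 * NN b h) / EE b h ^ 2)
      (fun h => -(1 - b ^ 2) * (4 * EE b h ^ 2 - 8 * (1 - b ^ 2)) / EE b h ^ 3)
      (β := fun h => 1 / (2 * a) * NN b h)
      (fun h => 1 / (2 * a) * (2 * EE b h)) (fun h => 1 / (2 * a) * (2 * (2 * NN b h)))
      (fun x => by
        refine ((EE_inv_deriv hb x).const_mul (-(1 - b ^ 2))).congr_deriv ?_
        ring)
      (fun x => by
        have := (((NN_deriv b x).const_mul 2).const_mul (1 - b ^ 2)).div
          ((EE_deriv b x).pow 2) (pow_ne_zero 2 (hE x).ne')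
        refine this.congr_deriv ?_
        have := (hE x).ne'
        have e := EE_sq b x
        simp
        field_simp
        have e2 : NN b x ^ 2 = EE b x ^ 2 - (1 - b ^ 2) := by linarith
        ring_nf
        simp only [e2]
        ring)
      (fun x => (NN_deriv b x).const_mul _) (fun x => ((EE_deriv b x).const_mul _).const_mul _) h
    have B := comb2 (hPy h) (hQy h) (α := fun _ => -(1 - b ^ 2) * (EE b h)⁻¹)
      (fun _ => 0) (fun _ => 0)
      (β := fun _ => 1 / (2 * a) * NN b h) (fun _ => 0) (fun _ => 0)
      (fun x => hasDerivAt_const _ _) (fun x => hasDerivAt_const _ _)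
      (fun x => hasDerivAt_const _ _) (fun x => hasDerivAt_const _ _) φ
    simp only [hμ]
    rw [A, B]
    have k1 := h1 h φ
    have k2 := h2 h φ
    have hEne := (hE h).ne'
    generalize deriv (deriv fun x => P x φ) h = Phh at *
    generalize deriv (deriv fun x => Q x φ) h = Qhh at *
    have k1' : deriv (deriv fun y => P h y) φ = 8 * (1 - b ^ 2) / EE b h ^ 2 * P h φ + 2 / a * deriv (fun x => Q x φ) h - Phh := by linarith
    have k2' : deriv (deriv fun y => Q h y) φ = - 4 * (NN b h / EE b h) * deriv (fun x => Q x φ) h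
        - 8 * a * (1 - b ^ 2) / EE b h ^ 2 * deriv (fun x => P x φ) h - Qhh := by linarith
    rw [k1', k2']
    have e2 : NN b h ^ 2 = EE b h ^ 2 - (1 - b ^ 2) := by linarith [EE_sq b h]
    field_simp
    ring_nf
    simp only [e2]
    ring
  have hμC : ContDiff ℝ 2 (fun p : ℝ × ℝ => μ p.1 p.2) :=
    (hP.mul (contDiff_const.mul hEic)).add (hQ.mul (contDiff_const.mul hNc))
  have hμper : ∀ h φ, μ h (φ + 2 * π) = μ h φ := fun h φ => by simp only [hμ, hPper, hQper]
  have hNb : ∀ h, |NN b h| ≤ 4 * cosh h ^ 2 := fun h => by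
    have i1 : |sinh (2 * h)| < cosh (2 * h) := by
      rw [abs_sinh, ← cosh_abs]; exact sinh_lt_cosh _
    have i2 : |b * cosh (2 * h)| ≤ cosh (2 * h) := by
      rw [abs_mul, abs_of_pos (cosh_pos _)]
      have : |b| ≤ 1 := abs_le.2 ⟨hb.1.le, hb.2.le⟩
      nlinarith [cosh_pos (2 * h)]
    have i3 := abs_add_le (sinh (2 * h)) (b * cosh (2 * h))
    have i4 := cosh_two_mul h
    have i5 := cosh_sq h
    simp only [NN]
    linarith
  obtain ⟨M, hM⟩ : ∃ M, ∀ h, (1 - b ^ 2) * (EE b h)⁻¹ ≤ M := by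
    have : ∀ h, (1 - b ^ 2) / 2 ≤ EE b h := fun h => by
      have i1 : |sinh (2 * h)| < cosh (2 * h) := by
        rw [abs_sinh, ← cosh_abs]; exact sinh_lt_cosh _
      have i0 := one_le_cosh (2 * h)
      have i2 : |b * sinh (2 * h)| ≤ |b| * cosh (2 * h) := by
        rw [abs_mul]
        exact mul_le_mul_of_nonneg_left i1.le (abs_nonneg _)
      have i3 := neg_abs_le (b * sinh (2 * h))
      have i4 : |b| ≤ 1 := abs_le.2 ⟨hb.1.le, hb.2.le⟩
      have i5 : 1 - b ^ 2 ≤ 2 * (1 - |b|) := by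
        rw [← sq_abs]; nlinarith [abs_nonneg b]
      simp only [EE]
      nlinarith
    refine ⟨2, fun h => ?_⟩
    rw [← div_eq_mul_inv, div_le_iff₀ (hE h)]
    linarith [this h]
  have hμB : ∀ h φ, |μ h φ| ≤ (C * M + C * (1 / (2 * a) * 4)) * cosh h := fun h φ => by
    have c1 := one_le_cosh h
    have hpos : 0 < (1 - b ^ 2) * (EE b h)⁻¹ := mul_pos hw (inv_pos.2 (hE h))
    rw [add_mul]
    refine (abs_add_le _ _).trans (add_le_add ?_ ?_)
    · have t1 : |P h φ * (-(1 - b ^ 2) * (EE b h)⁻¹)| = |P h φ| * ((1 - b ^ 2) * (EE b h)⁻¹) := by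
        rw [abs_mul, neg_mul, abs_neg, abs_of_pos hpos]
      rw [t1]
      have t2 : |P h φ| * ((1 - b ^ 2) * (EE b h)⁻¹) ≤ C * M :=
        mul_le_mul (hCP h φ) (hM h) hpos.le hC0
      have : 0 ≤ C * M := mul_nonneg hC0 (hpos.le.trans (hM h))
      nlinarith
    · have t1 : |Q h φ * (1 / (2 * a) * NN b h)| = (1 / (2 * a)) * (|Q h φ| * |NN b h|) := by
        rw [abs_mul, abs_mul, abs_of_pos (show 0 < 1 / (2 * a) by positivity)]; ring
      rw [t1]
      have t2 : |Q h φ| * |NN b h| ≤ (|Q h φ| * cosh h) * (4 * cosh h) := by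
        have := mul_le_mul_of_nonneg_left (hNb h) (abs_nonneg (Q h φ))
        linarith
      have t3 : (|Q h φ| * cosh h) * (4 * cosh h) ≤ C * (4 * cosh h) :=
        mul_le_mul_of_nonneg_right (hCQ h φ) (by linarith)
      have t4 : 0 ≤ 1 / (2 * a) := by positivity
      have := mul_le_mul_of_nonneg_left (t2.trans t3) t4
      linarith
  have hμ0 := cyl_max μ hμC hμper _ hμB hμL
  refine ⟨τ 0 0, fun h φ => ?_⟩
  have r1 : P h φ * (NN b h * (EE b h)⁻¹) + Q h φ * (1 / (2 * a)) = τ 0 0 := hconst h φ 0 0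
  have r2 : P h φ * (-(1 - b ^ 2) * (EE b h)⁻¹) + Q h φ * (1 / (2 * a) * NN b h) = 0 := hμ0 h φ
  have hEne := (hE h).ne'
  have e2 := EE_sq b h
  rw [← r1]
  have hwne := hw.ne'
  constructor
  · field_simp at r2 ⊢
    linear_combination 2 * a * P h φ * e2 - r2
  · field_simp at r2 ⊢
    linear_combination EE b h * Q h φ * e2 + NN b h * r2

def Th (h : ℝ) : ℝ := π / 2 - arctan (sinh h)

lemma sqrt_one_add_sinh (h : ℝ) : √(1 + sinh h ^ 2) = cosh h := by
  rw [add_comm, ← cosh_sq, sqrt_sq (cosh_pos h).le]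

lemma cos_Th (h : ℝ) : cos (Th h) = sinh h / cosh h := by
  rw [Th, cos_pi_div_two_sub, sin_arctan, sqrt_one_add_sinh]

lemma sin_Th (h : ℝ) : sin (Th h) = 1 / cosh h := by
  rw [Th, sin_pi_div_two_sub, cos_arctan, sqrt_one_add_sinh]

lemma Th_mem (h : ℝ) : Th h ∈ Ioo 0 π := by
  have h1 := arctan_lt_pi_div_two (sinh h)
  have h2 := neg_pi_div_two_lt_arctan (sinh h)
  constructor <;> simp only [Th] <;> linarith

lemma Th_surj {θ : ℝ} (hθ : θ ∈ Ioo 0 π) : ∃ h, Th h = θ := by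
  refine ⟨arsinh (tan (π / 2 - θ)), ?_⟩
  rw [Th, sinh_arsinh, arctan_tan (by linarith [hθ.2]) (by linarith [hθ.1])]
  ring

lemma Th_deriv (h : ℝ) : HasDerivAt Th (-(1 / cosh h)) h := by
  have := ((hasDerivAt_sinh h).arctan).const_sub (π / 2)
  refine this.congr_deriv ?_
  rw [add_comm, ← cosh_sq]
  have := (cosh_pos h).ne'
  field_simp

lemma Th_contDiff : ContDiff ℝ 2 Th := by
  have h1 : ContDiff ℝ 2 sinh := contDiff_sinh
  have h2 : ContDiff ℝ 2 arctan := contDiff_arctan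
  exact contDiff_const.sub (h2.comp h1)

section sphere
variable {ψ : ℝ → ℝ → ℝ}

lemma ck_comp (hC : CkSphere 2 ψ) : ContDiff ℝ 2 (fun p : ℝ × ℝ => ψ (Th p.1) p.2) := by
  have h1 : ContDiff ℝ 2 (fun p : ℝ × ℝ => ((Th p.1, p.2) : ℝ × ℝ)) :=
    (Th_contDiff.comp contDiff_fst).prodMk contDiff_snd
  exact hC.1.comp_contDiff h1 (fun p => ⟨Th_mem _, mem_univ _⟩)

lemma ck_theta (hC : CkSphere 2 ψ) (φ : ℝ) : ContDiffOn ℝ 2 (fun x => ψ x φ) (Ioo 0 π) :=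
  hC.1.comp (contDiff_id.prodMk contDiff_const).contDiffOn (fun _ hx => ⟨hx, mem_univ _⟩)

lemma ck_d1 (hC : CkSphere 2 ψ) {θ : ℝ} (hθ : θ ∈ Ioo 0 π) (φ : ℝ) :
    HasDerivAt (fun x => ψ x φ) (pdθ ψ θ φ) θ :=
  (((ck_theta hC φ).differentiableOn (by norm_num)).differentiableAt
    (isOpen_Ioo.mem_nhds hθ)).hasDerivAt

lemma ck_d2 (hC : CkSphere 2 ψ) {θ : ℝ} (hθ : θ ∈ Ioo 0 π) (φ : ℝ) :
    HasDerivAt (fun x => pdθ ψ x φ) (pdθ (pdθ ψ) θ φ) θ := by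
  have h1 : ContDiffOn ℝ 1 (deriv (fun x => ψ x φ)) (Ioo 0 π) :=
    (ck_theta hC φ).deriv_of_isOpen isOpen_Ioo (by norm_num)
  exact ((h1.differentiableOn (by norm_num)).differentiableAt
    (isOpen_Ioo.mem_nhds hθ)).hasDerivAt

lemma comp_d1 (hC : CkSphere 2 ψ) (φ : ℝ) :
    deriv (fun x => ψ (Th x) φ) = fun h => pdθ ψ (Th h) φ * -(1 / cosh h) := by
  funext h
  exact ((ck_d1 hC (Th_mem h) φ).comp h (Th_deriv h)).deriv

lemma comp_d2 (hC : CkSphere 2 ψ) (h φ : ℝ) :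
    deriv (deriv (fun x => ψ (Th x) φ)) h =
      (1 / cosh h) ^ 2 * (pdθ (pdθ ψ) (Th h) φ + sinh h * pdθ ψ (Th h) φ) := by
  rw [comp_d1 hC]
  have hc := (cosh_pos h).ne'
  have h1 := (ck_d2 hC (Th_mem h) φ).comp h (Th_deriv h)
  have h2 := (((hasDerivAt_cosh h).inv hc).neg)
  have h3 := (h1.mul h2).deriv
  have e : (fun h => pdθ ψ (Th h) φ * -(1 / cosh h)) =
      (((fun x => pdθ ψ x φ) ∘ Th) * -cosh⁻¹) := by
    funext x; simp
  rw [e, h3]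
  simp
  field_simp

lemma ck_bd0 {C : ℝ} (hC : ∀ j ≤ 2, ∀ θ ∈ Ioo (0 : ℝ) π, ∀ φ : ℝ, covNorm j ψ θ φ ≤ C)
    {θ : ℝ} (hθ : θ ∈ Ioo 0 π) (φ : ℝ) : |ψ θ φ| ≤ C := by
  have := hC 0 (by norm_num) θ hθ φ
  simpa [covNorm, covIter, sqrt_sq_eq_abs] using this

lemma ck_bd1 {C : ℝ} (hC : ∀ j ≤ 2, ∀ θ ∈ Ioo (0 : ℝ) π, ∀ φ : ℝ, covNorm j ψ θ φ ≤ C)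
    {θ : ℝ} (hθ : θ ∈ Ioo 0 π) (φ : ℝ) : |pdθ ψ θ φ| ≤ C := by
  have := hC 1 (by norm_num) θ hθ φ
  refine le_trans ?_ this
  rw [covNorm, ← sqrt_sq_eq_abs]
  apply sqrt_le_sqrt
  have hs := Finset.single_le_sum (f := fun I : Fin 1 → Fin 2 =>
    (∏ j, sphWeight (I j) θ) * (covIter ψ 1 I θ φ) ^ 2) (s := Finset.univ)
    (fun I _ => by
      refine mul_nonneg (Finset.prod_nonneg fun j _ => ?_) (sq_nonneg _)
      simp only [sphWeight]; split_ifs <;> positivity) (Finset.mem_univ (fun _ => 0))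
  refine le_trans (le_of_eq ?_) hs
  simp [sphWeight, covIter, covDer, pder2]

lemma abs_le_of_tendsto_zero {f : ℝ → ℝ} {C c : ℝ} {s : Set ℝ} {l : Filter ℝ} [l.NeBot]
    (hl : Tendsto f l (nhds 0)) (hls : ∀ᶠ y in l, y ∈ s) (hlc : Tendsto (fun y => y) l (nhds c))
    (hs : Convex ℝ s)
    (hf : ∀ x ∈ s, DifferentiableAt ℝ f x) (hd : ∀ x ∈ s, ‖deriv f x‖ ≤ C) {x : ℝ} (hx : x ∈ s) :
    |f x| ≤ C * |x - c| := by
  have h1 : Tendsto (fun y => ‖f x - f y‖) l (nhds ‖f x - 0‖) := (tendsto_const_nhds.sub hl).norm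
  have h2 : Tendsto (fun y => C * ‖x - y‖) l (nhds (C * ‖x - c‖)) :=
    ((tendsto_const_nhds.sub hlc).norm).const_mul C
  have := le_of_tendsto_of_tendsto h1 h2 (by
    filter_upwards [hls] with y hy
    exact hs.norm_image_sub_le_of_norm_deriv_le hf hd hy hx)
  simpa using this

lemma ck_bdsin (hCk : CkSphere 2 ψ)
    (hN : ∀ φ : ℝ, Tendsto (fun θ => ψ θ φ) (nhdsWithin 0 (Ioi 0)) (nhds 0))
    (hS : ∀ φ : ℝ, Tendsto (fun θ => ψ θ φ) (nhdsWithin π (Iio π)) (nhds 0))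
    {C : ℝ} (hC : ∀ j ≤ 2, ∀ θ ∈ Ioo (0 : ℝ) π, ∀ φ : ℝ, covNorm j ψ θ φ ≤ C)
    {θ : ℝ} (hθ : θ ∈ Ioo 0 π) (φ : ℝ) : |ψ θ φ| ≤ C * (π / 2) * sin θ := by
  have hC0 : 0 ≤ C := (abs_nonneg _).trans (ck_bd0 hC hθ φ)
  have hpi := pi_pos
  have key : ∀ x, 0 ≤ x → x ≤ π / 2 → C * x ≤ C * (π / 2) * sin x := by
    intro x hx hx'
    have := mul_le_sin hx hx'
    have h2 : x ≤ π / 2 * sin x := by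
      have := mul_le_mul_of_nonneg_left this (show 0 ≤ π / 2 by positivity)
      have e : π / 2 * (2 / π * x) = x := by field_simp
      linarith
    nlinarith
  have hdif : ∀ x ∈ Ioo 0 π, DifferentiableAt ℝ (fun x => ψ x φ) x :=
    fun x hx => (ck_d1 hCk hx φ).differentiableAt
  have hder : ∀ x ∈ Ioo 0 π, ‖deriv (fun x => ψ x φ) x‖ ≤ C := fun x hx => ck_bd1 hC hx φ
  rcases le_total θ (π / 2) with h | h
  · have := abs_le_of_tendsto_zero (hN φ) (Ioo_mem_nhdsGT hpi)
      (tendsto_id.mono_left nhdsWithin_le_nhds) (convex_Ioo 0 π) hdif hder hθ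
    rw [sub_zero, abs_of_pos hθ.1] at this
    exact this.trans (key θ hθ.1.le h)
  · have := abs_le_of_tendsto_zero (hS φ) (Ioo_mem_nhdsLT hpi)
      (tendsto_id.mono_left nhdsWithin_le_nhds) (convex_Ioo 0 π) hdif hder hθ
    rw [abs_sub_comm, abs_of_pos (show 0 < π - θ by linarith [hθ.2])] at this
    have k := key (π - θ) (by linarith [hθ.2]) (by linarith)
    rw [sin_pi_sub] at k
    exact this.trans k

end sphere

/-- the denominator -/
def DD (b θ : ℝ) : ℝ := 1 + cos θ ^ 2 + 2 * b * cos θ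

lemma DD_Th (b h : ℝ) : DD b (Th h) = EE b h / cosh h ^ 2 := by
  have hc := (cosh_pos h).ne'
  rw [DD, cos_Th, EE, cosh_two_mul, sinh_two_mul]
  field_simp

lemma NN_Th (b h : ℝ) : b + b * cos (Th h) ^ 2 + 2 * cos (Th h) = NN b h / cosh h ^ 2 := by
  have hc := (cosh_pos h).ne'
  rw [cos_Th, NN, cosh_two_mul, sinh_two_mul]
  field_simp
  ring

lemma DD_pos {b : ℝ} (hb : b ∈ Ioo (-1 : ℝ) 1) (h : ℝ) : 0 < DD b (Th h) := by
  rw [DD_Th]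
  exact div_pos (EE_pos hb h) (by have := cosh_pos h; positivity)

lemma DD_deriv (b θ : ℝ) : HasDerivAt (DD b) (-2 * sin θ * (cos θ + b)) θ := by
  have := (((hasDerivAt_cos θ).pow 2).const_add 1).add ((hasDerivAt_cos θ).const_mul (2 * b))
  refine this.congr_deriv ?_
  simp
  ring

lemma vab_d (a b : ℝ) (hb : b ∈ Ioo (-1 : ℝ) 1) (h φ : ℝ) :
    pdθ (fun θ' _ => vab a b θ') (Th h) φ = - (2 * a * (1 - b ^ 2) * cosh h / EE b h ^ 2) := by
  have hD := (DD_pos hb h).ne'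
  have h1 : HasDerivAt (fun θ => a * (b + b * cos θ ^ 2 + 2 * cos θ))
      (a * (-2 * sin (Th h) * (b * cos (Th h) + 1))) (Th h) := by
    have := (((((hasDerivAt_cos (Th h)).pow 2).const_mul b).const_add b).add
      ((hasDerivAt_cos (Th h)).const_mul 2)).const_mul a
    refine this.congr_deriv ?_
    simp
    ring
  have := (h1.div (DD_deriv b (Th h)) hD).deriv
  refine Eq.trans this ?_
  rw [NN_Th, DD_Th, cos_Th, sin_Th, NN, EE, cosh_two_mul, sinh_two_mul]
  have hE := EE_pos hb h
  rw [EE, cosh_two_mul, sinh_two_mul] at hE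
  have hc := (cosh_pos h).ne'
  have hE' := hE.ne'
  have e : sinh h ^ 2 = cosh h ^ 2 - 1 := by linarith [cosh_sq h]
  have e4 : sinh h ^ 4 = (cosh h ^ 2 - 1) ^ 2 := by rw [← e]; ring
  have e3 : sinh h ^ 3 = sinh h * (cosh h ^ 2 - 1) := by rw [← e]; ring
  field_simp
  ring_nf
  simp only [e, e3, e4]
  ring

lemma uab_d (a b : ℝ) (ha : 0 < a) (hb : b ∈ Ioo (-1 : ℝ) 1) (h φ : ℝ) :
    pdθ (fun θ' _ => uab a b θ') (Th h) φ = - (cosh h * (NN b h / EE b h)) := by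
  have hD := (DD_pos hb h).ne'
  have hw : 0 < 1 - b ^ 2 := by nlinarith [hb.1, hb.2]
  have hk : 2 * a * √(1 - b ^ 2) ≠ 0 := by have := sqrt_pos.2 hw; positivity
  have hs : sin (Th h) ≠ 0 := by rw [sin_Th]; have := cosh_pos h; positivity
  have h1 := ((hasDerivAt_sin (Th h)).log hs).neg
  have h2 := (((hasDerivAt_const (Th h) (2 * a * √(1 - b ^ 2))).div (DD_deriv b (Th h)) hD).log
    (div_ne_zero hk hD)).const_mul (1 / 2)
  have := (h1.sub h2).deriv
  refine Eq.trans this ?_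
  simp only [Pi.div_apply]
  have e0 : (0 * DD b (Th h) - 2 * a * √(1 - b ^ 2) * (-2 * sin (Th h) * (cos (Th h) + b))) /
      DD b (Th h) ^ 2 / (2 * a * √(1 - b ^ 2) / DD b (Th h)) =
      2 * sin (Th h) * (cos (Th h) + b) / DD b (Th h) := by
    have := sqrt_pos.2 hw
    field_simp
    ring
  rw [e0, DD_Th, cos_Th, sin_Th]
  have hc := (cosh_pos h).ne'
  have hE' := (EE_pos hb h).ne'
  have e : sinh h ^ 2 = cosh h ^ 2 - 1 := by linarith [cosh_sq h]
  have e3 : sinh h ^ 3 = sinh h * (cosh h ^ 2 - 1) := by rw [← e]; ring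
  field_simp
  rw [NN, EE, cosh_two_mul, sinh_two_mul]
  ring_nf
  simp only [e, e3]
  ring

lemma uab_exp (a b : ℝ) (ha : 0 < a) (hb : b ∈ Ioo (-1 : ℝ) 1) (h : ℝ) :
    exp (4 * uab a b (Th h)) = EE b h ^ 2 / (4 * a ^ 2 * (1 - b ^ 2)) := by
  have hD := DD_pos hb h
  have hw : 0 < 1 - b ^ 2 := by nlinarith [hb.1, hb.2]
  have hr := sqrt_pos.2 hw
  have hs : 0 < sin (Th h) := by rw [sin_Th]; have := cosh_pos h; positivity
  have hq : 0 < 2 * a * √(1 - b ^ 2) / DD b (Th h) := by positivity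
  have e : 4 * uab a b (Th h) = -(log (sin (Th h) ^ 4 * (2 * a * √(1 - b ^ 2) / DD b (Th h)) ^ 2)) := by
    rw [log_mul (by positivity) (by positivity), log_pow, log_pow]
    simp only [uab, DD]
    push_cast
    ring
  rw [e, exp_neg, exp_log (by positivity), DD_Th, sin_Th]
  have hc := (cosh_pos h).ne'
  have hE' := (EE_pos hb h).ne'
  have hsq : √(1 - b ^ 2) ^ 2 = 1 - b ^ 2 := sq_sqrt hw.le
  rw [div_pow, div_pow (2 * a * √(1 - b ^ 2)), mul_pow, hsq]
  field_simp
  norm_num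

/-- Proposition `prop:kerr-kernel`: the kernel of the linearized
harmonic map operator at `(u_{a,b}, v_{a,b})` is one-dimensional, generated by
`(∂_b u_{a,b}, ∂_b v_{a,b})`. -/
theorem statement_2
    (a b : ℝ) (ha : 0 < a) (hb : b ∈ Ioo (-1 : ℝ) 1)
    (ψ₁ ψ₂ : ℝ → ℝ → ℝ)
    (hC1 : CkSphere 2 ψ₁) (hC2 : CkSphere 2 ψ₂)
    (hzeroN : ∀ φ : ℝ, Tendsto (fun θ => ψ₂ θ φ) (nhdsWithin 0 (Ioi 0)) (nhds 0))
    (hzeroS : ∀ φ : ℝ, Tendsto (fun θ => ψ₂ θ φ) (nhdsWithin π (Iio π)) (nhds 0))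
    (hint : IntegrableOn (fun p : ℝ × ℝ =>
        Real.exp (4 * uab a b p.1) *
          (gradNormSqS2 ψ₂ p.1 p.2 + (ψ₂ p.1 p.2) ^ 2) * Real.sin p.1)
        (Ioo 0 π ×ˢ Ioo 0 (2 * π)) volume)
    (heq1 : ∀ θ ∈ Ioo (0 : ℝ) π, ∀ φ : ℝ,
      lapS2 ψ₁ θ φ
        - 8 * Real.exp (4 * uab a b θ) *
            gradNormSqS2 (fun θ' _ => vab a b θ') θ φ * ψ₁ θ φ
        - 4 * Real.exp (4 * uab a b θ) *
            gradDotS2 (fun θ' _ => vab a b θ') ψ₂ θ φ = 0)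
    (heq2 : ∀ θ ∈ Ioo (0 : ℝ) π, ∀ φ : ℝ,
      lapS2 ψ₂ θ φ
        + 4 * gradDotS2 (fun θ' _ => uab a b θ') ψ₂ θ φ
        + 4 * gradDotS2 (fun θ' _ => vab a b θ') ψ₁ θ φ = 0) :
    ∃ lam : ℝ, ∀ θ ∈ Ioo (0 : ℝ) π, ∀ φ : ℝ,
      ψ₁ θ φ = lam * (b / (2 * (1 - b ^ 2))
          + Real.cos θ / (1 + Real.cos θ ^ 2 + 2 * b * Real.cos θ)) ∧
      ψ₂ θ φ = lam * a * Real.sin θ ^ 4 /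
          (1 + Real.cos θ ^ 2 + 2 * b * Real.cos θ) ^ 2 := by
  
  obtain ⟨-, hper1, C1, hB1⟩ := id hC1
  obtain ⟨-, hper2, C2, hB2⟩ := id hC2
  have hw : 0 < 1 - b ^ 2 := by nlinarith [hb.1, hb.2]
  have hpi := pi_pos
  have hC10 : 0 ≤ C1 := (abs_nonneg _).trans (ck_bd0 hB1 (Th_mem 0) 0)
  have hC20 : 0 ≤ C2 := (abs_nonneg _).trans (ck_bd0 hB2 (Th_mem 0) 0)
  have hmain := main_cyl a b ha hb (fun h φ => ψ₁ (Th h) φ) (fun h φ => ψ₂ (Th h) φ)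
    (ck_comp hC1) (ck_comp hC2) (fun h φ => hper1 _ _) (fun h φ => hper2 _ _)
    (C1 + C2 * (π / 2))
    (fun h φ => (ck_bd0 hB1 (Th_mem h) φ).trans (le_add_of_nonneg_right (by positivity)))
    (fun h φ => by
      have h1 := ck_bdsin hC2 hzeroN hzeroS hB2 (Th_mem h) φ
      rw [sin_Th] at h1
      have hc := cosh_pos h
      have h2 := mul_le_mul_of_nonneg_right h1 hc.le
      have h3 : C2 * (π / 2) * (1 / cosh h) * cosh h = C2 * (π / 2) := by field_simp
      linarith)
    (fun h φ => by
      have h1 := heq1 (Th h) (Th_mem h) φ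
      have hc := (cosh_pos h).ne'
      have hE := (EE_pos hb h).ne'
      simp only [lapS2, gradNormSqS2, gradDotS2, vab_d a b hb, uab_exp a b ha hb, cos_Th,
        sin_Th] at h1
      simp only [comp_d2 hC1, comp_d1 hC2]
      have z : pdφ (fun θ' _ => vab a b θ') (Th h) φ = 0 := by simp [pdφ]
      rw [z] at h1
      change _ + pdφ (pdφ ψ₁) (Th h) φ = _
      have hwne := hw.ne'
      field_simp at h1 ⊢
      apply mul_left_cancel₀ (mul_ne_zero (mul_ne_zero four_ne_zero ha.ne') hwne)
      linear_combination h1)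
    (fun h φ => by
      have h1 := heq2 (Th h) (Th_mem h) φ
      have hc := (cosh_pos h).ne'
      have hE := (EE_pos hb h).ne'
      simp only [lapS2, gradDotS2, vab_d a b hb, uab_d a b ha hb, cos_Th,
        sin_Th] at h1
      simp only [comp_d2 hC2]
      simp only [comp_d1 hC2, comp_d1 hC1]
      have z : pdφ (fun θ' _ => vab a b θ') (Th h) φ = 0 := by simp [pdφ]
      have z' : pdφ (fun θ' _ => uab a b θ') (Th h) φ = 0 := by simp [pdφ]
      rw [z, z'] at h1
      change _ + pdφ (pdφ ψ₂) (Th h) φ = _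
      field_simp at h1 ⊢
      linear_combination h1)
  obtain ⟨κ, hκ⟩ := hmain
  refine ⟨2 * (1 - b ^ 2) * κ, fun θ hθ φ => ?_⟩
  obtain ⟨h, rfl⟩ := Th_surj hθ
  obtain ⟨r1, r2⟩ := hκ h φ
  have hc := (cosh_pos h).ne'
  have hE := (EE_pos hb h).ne'
  have hwne := hw.ne'
  have hD := DD_Th b h
  have hN := NN_Th b h
  have hDp := (DD_pos hb h).ne'
  have hT : NN b h / EE b h = (b + b * cos (Th h) ^ 2 + 2 * cos (Th h)) / DD b (Th h) := by
    rw [hD, hN]; field_simp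
  change _ = _ * (_ + _ / DD b (Th h)) ∧ _ = _ / (DD b (Th h)) ^ 2
  constructor
  · rw [r1, hT]
    field_simp
    simp only [DD]
    ring
  · rw [r2, hD, sin_Th]
    field_simp
end
end
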